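/- Assume the cocycle f is convolution invertible. For each h ∈ H the maps θ_h^r : Hom_k(Ā^r,M) → Hom_k(Ā^r,M), θ_h^r(φ)(𝐚) = (1#h^{(1)})^{-1} φ(𝐚^{h^{(2)}}) (1#h^{(3)}), form an endomorphism θ_h^* of the normalized Hochschild cochain complex (Hom_k(Ā^*,M), b^*). For all h, l ∈ H and all n, the endomorphisms of the Hochschild cohomology H^n(A,M) induced by θ_l^* ∘ θ_h^* and by θ_{hl}^* coincide, and θ_1^* induces the identity; consequently H^*(A,M) carries a natural structure of right H-module. -/

import Mathlib

open TensorProduct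

noncomputable section

namespace HopfCrossed

variable (k : Type) [CommRing k]

def TpowCat (V : ModuleCat k) : ℕ → ModuleCat k
  | 0 => ModuleCat.of k k
  | n + 1 => ModuleCat.of k (V ⊗[k] (TpowCat V n))

abbrev Tpow (V : Type) [AddCommGroup V] [Module k V] (n : ℕ) : Type :=
  TpowCat k (ModuleCat.of k V) n

def tp {V : Type} [AddCommGroup V] [Module k V] : ∀ {n : ℕ}, (Fin n → V) → Tpow k V n
  | 0, _ => (1 : k)
  | _ + 1, v => (v 0) ⊗ₜ[k] (tp fun i => v i.succ)

section Coalg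
variable {H : Type} [AddCommGroup H] [Module k H]

def itComul [Coalgebra k H] : ∀ n : ℕ, H →ₗ[k] Tpow k H (n + 1)
  | 0 => (TensorProduct.rid k H).symm.toLinearMap
  | n + 1 =>
      (TensorProduct.map LinearMap.id (itComul n)) ∘ₗ (Coalgebra.comul (R := k))

def SRep [Coalgebra k H] (n : ℕ) (h : H) (N : ℕ) (u : Fin N → Fin (n + 1) → H) : Prop :=
  itComul k n h = ∑ i, tp k (u i)

def iterAct {A : Type} [AddCommGroup A] [Module k A]
    (act : H →ₗ[k] A →ₗ[k] A) : ∀ {s : ℕ}, (Fin s → H) → A → A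
  | 0, _, a => a
  | _ + 1, h, a => act (h 0) (iterAct act (fun i => h i.succ) a)

end Coalg

/-- A weak action of a Hopf algebra `H` on a `k`-algebra `A` (Blattner–Cohen–Montgomery,
Doi–Takeuchi), written `act h a = a^h`. -/
structure WeakAction (k A H : Type) [CommRing k] [Ring A] [Algebra k A] [Ring H] [HopfAlgebra k H] : Type where
  act : H →ₗ[k] A →ₗ[k] A
  act_mul : ∀ (h : H) (a b : A) (N : ℕ) (u : Fin N → Fin 2 → H), SRep k 1 h N u →
    act h (a * b) = ∑ i, act (u i 0) a * act (u i 1) b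
  act_one : ∀ h : H, act h 1 = Coalgebra.counit (R := k) h • (1 : A)
  one_act : ∀ a : A, act 1 a = a

variable {A H : Type} [Ring A] [Algebra k A] [Ring H] [HopfAlgebra k H]
variable {k}

/-- Normality of the cocycle `f`. -/
def IsNormal (f : H →ₗ[k] H →ₗ[k] A) : Prop :=
  ∀ h : H, f h 1 = Coalgebra.counit (R := k) h • (1 : A) ∧
    f 1 h = Coalgebra.counit (R := k) h • (1 : A)

/-- The cocycle condition
`f(l⁽¹⁾,m⁽¹⁾)^{h⁽¹⁾} f(h⁽²⁾, l⁽²⁾m⁽²⁾) = f(h⁽¹⁾,l⁽¹⁾) f(h⁽²⁾l⁽²⁾, m)`. -/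
def IsCocycle (W : WeakAction k A H) (f : H →ₗ[k] H →ₗ[k] A) : Prop :=
  ∀ (h l m : H) (N₁ N₂ N₃ : ℕ) (u : Fin N₁ → Fin 2 → H) (v : Fin N₂ → Fin 2 → H)
    (w : Fin N₃ → Fin 2 → H),
    SRep k 1 h N₁ u → SRep k 1 l N₂ v → SRep k 1 m N₃ w →
    (∑ i, ∑ j, ∑ p, W.act (u i 0) (f (v j 0) (w p 0)) * f (u i 1) (v j 1 * w p 1)) =
      ∑ i, ∑ j, f (u i 0) (v j 0) * f (u i 1 * v j 1) m

/-- The twisted module condition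
`(a^{l⁽¹⁾})^{h⁽¹⁾} f(h⁽²⁾,l⁽²⁾) = f(h⁽¹⁾,l⁽¹⁾) a^{h⁽²⁾l⁽²⁾}`. -/
def IsTwistedModule (W : WeakAction k A H) (f : H →ₗ[k] H →ₗ[k] A) : Prop :=
  ∀ (h l : H) (a : A) (N₁ N₂ : ℕ) (u : Fin N₁ → Fin 2 → H) (v : Fin N₂ → Fin 2 → H),
    SRep k 1 h N₁ u → SRep k 1 l N₂ v →
    (∑ i, ∑ j, W.act (u i 0) (W.act (v j 0) a) * f (u i 1) (v j 1)) =
      ∑ i, ∑ j, f (u i 0) (v j 0) * W.act (u i 1 * v j 1) a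

variable (k A H) in
/-- A crossed product `E = A #_f H` of `A` by `H`:  a ring `E` identified with `A ⊗ H`
as a `k`-module, whose multiplication is given by the crossed product formula
`(a # h)(b # l) = a b^{h⁽¹⁾} f(h⁽²⁾,l⁽¹⁾) # h⁽³⁾ l⁽²⁾`. -/
structure CrossedProduct (E : Type) [Ring E] [Algebra k E] extends WeakAction k A H where
  f : H →ₗ[k] H →ₗ[k] A
  ι : (A ⊗[k] H) ≃ₗ[k] E
  ι_one : ι (1 ⊗ₜ[k] 1) = 1
  ι_mul : ∀ (a b : A) (h l : H) (N M : ℕ) (u : Fin N → Fin 3 → H) (v : Fin M → Fin 2 → H),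
    SRep k 2 h N u → SRep k 1 l M v →
    ι (a ⊗ₜ[k] h) * ι (b ⊗ₜ[k] l) =
      ∑ i, ∑ j, ι ((a * act (u i 0) b * f (u i 1) (v j 0)) ⊗ₜ[k] (u i 2 * v j 1))
  f_normal : IsNormal f
  f_cocycle : IsCocycle toWeakAction f
  f_twisted : IsTwistedModule toWeakAction f

namespace CrossedProduct

variable {E : Type} [Ring E] [Algebra k E] (S : CrossedProduct k A H E)

/-- The canonical map `A → E`, `a ↦ a # 1`. -/
def aE : A →ₗ[k] E := S.ι.toLinearMap ∘ₗ (TensorProduct.mk k A H).flip 1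

/-- The canonical map `H → E`, `h ↦ 1 # h`. -/
def hE : H →ₗ[k] E := S.ι.toLinearMap ∘ₗ (TensorProduct.mk k A H) 1

end CrossedProduct

section Hochschild

variable (k) in
/-- For a `k`-algebra `B`, the submodule `k·1 ⊆ B`. -/
abbrev unitSub (B : Type) [Ring B] [Algebra k B] : Submodule k B :=
  LinearMap.range (Algebra.linearMap k B)

variable (k) in
/-- `B̄ = B/k`. -/
abbrev Qbar (B : Type) [Ring B] [Algebra k B] : Type := B ⧸ unitSub k B

variable (k) in
/-- The canonical projection `B → B̄`. -/
abbrev qbar (B : Type) [Ring B] [Algebra k B] : B →ₗ[k] Qbar k B :=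
  (unitSub k B).mkQ

/-- A `B`-bimodule structure (with commuting `k`-linear left and right actions)
on a `k`-module `M`. -/
structure Bimod (k B M : Type) [CommRing k] [Ring B] [Algebra k B]
    [AddCommGroup M] [Module k M] : Type where
  l : B →ₗ[k] M →ₗ[k] M
  r : B →ₗ[k] M →ₗ[k] M
  l_one : l 1 = LinearMap.id
  r_one : r 1 = LinearMap.id
  l_mul : ∀ x y : B, l (x * y) = l x ∘ₗ l y
  r_mul : ∀ x y : B, r (x * y) = r y ∘ₗ r x
  lr_comm : ∀ x y : B, l x ∘ₗ r y = r y ∘ₗ l x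

/-- Replace the `r`-tuple `a` by the `(r-1)`-tuple obtained by multiplying the
`i`-th and `(i+1)`-st entries. -/
def mulAt {A : Type} [Mul A] {r : ℕ} (a : Fin (r + 1) → A) (i : Fin r) (j : Fin r) : A :=
  if (j : ℕ) < (i : ℕ) then a j.castSucc
  else if (j : ℕ) = (i : ℕ) then a j.castSucc * a j.succ else a j.succ

variable (k) in
/-- The degree-`n` part `M ⊗ B̄^{⊗n}` of the normalized Hochschild chain complex. -/
abbrev HCh (B M : Type) [Ring B] [Algebra k B] [AddCommGroup M] [Module k M]
    (n : ℕ) : Type :=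
  M ⊗[k] Tpow k (Qbar k B) n

variable (k) in
/-- `IsHochschildD l r bd` says that `bd` is the differential of the normalized
Hochschild chain complex of `B` with coefficients in the bimodule `M` (with left
action `l` and right action `r`):
`b(m ⊗ x₁ ⊗ ⋯ ⊗ xₙ) = m x₁ ⊗ x₂ ⊗ ⋯ + ∑ (-1)^i m ⊗ ⋯ ⊗ xᵢxᵢ₊₁ ⊗ ⋯ + (-1)^n xₙ m ⊗ x₁ ⊗ ⋯ ⊗ xₙ₋₁`. -/
def IsHochschildD {B M : Type} [Ring B] [Algebra k B] [AddCommGroup M] [Module k M]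
    (l r : B →ₗ[k] M →ₗ[k] M)
    (bd : ∀ n : ℕ, HCh k B M (n + 1) →ₗ[k] HCh k B M n) : Prop :=
  ∀ (n : ℕ) (m : M) (x : Fin (n + 1) → B),
    bd n (m ⊗ₜ[k] tp k (fun i => qbar k B (x i))) =
      r (x 0) m ⊗ₜ[k] tp k (fun i : Fin n => qbar k B (x i.succ))
      + (∑ i : Fin n, ((-1 : ℤ) ^ ((i : ℕ) + 1)) •
          (m ⊗ₜ[k] tp k (fun j => qbar k B (mulAt x i j))))
      + ((-1 : ℤ) ^ (n + 1)) •
          (l (x (Fin.last n)) m ⊗ₜ[k] tp k (fun i : Fin n => qbar k B (x i.castSucc)))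

variable (k) in
/-- The homology of a (not necessarily everywhere-defined) chain complex
`⋯ → C (n+1) → C n → ⋯ → C 0`; in degree `n+1` it is `ker (d n) / im (d (n+1))`, and in
degree `0` it is `C 0 / im (d 0)`. -/
def Hml {C : ℕ → Type} [∀ n, AddCommGroup (C n)] [∀ n, Module k (C n)]
    (d : ∀ n : ℕ, C (n + 1) →ₗ[k] C n) : ℕ → Type
  | 0 => C 0 ⧸ LinearMap.range (d 0)
  | n + 1 => LinearMap.ker (d n) ⧸
      (LinearMap.range (d (n + 1))).comap (LinearMap.ker (d n)).subtype

instance {C : ℕ → Type} [∀ n, AddCommGroup (C n)] [∀ n, Module k (C n)]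
    (d : ∀ n : ℕ, C (n + 1) →ₗ[k] C n) : ∀ n, AddCommGroup (Hml k d n)
  | 0 => inferInstanceAs (AddCommGroup (C 0 ⧸ LinearMap.range (d 0)))
  | n + 1 => inferInstanceAs (AddCommGroup (LinearMap.ker (d n) ⧸
      (LinearMap.range (d (n + 1))).comap (LinearMap.ker (d n)).subtype))

instance {C : ℕ → Type} [∀ n, AddCommGroup (C n)] [∀ n, Module k (C n)]
    (d : ∀ n : ℕ, C (n + 1) →ₗ[k] C n) : ∀ n, Module k (Hml k d n)
  | 0 => inferInstanceAs (Module k (C 0 ⧸ LinearMap.range (d 0)))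
  | n + 1 => inferInstanceAs (Module k (LinearMap.ker (d n) ⧸
      (LinearMap.range (d (n + 1))).comap (LinearMap.ker (d n)).subtype))

end Hochschild

section CoHochschild

variable (k) in
/-- The degree-`n` part `Hom_k(B̄^{⊗n}, M)` of the normalized Hochschild cochain complex. -/
abbrev CoHCh (B M : Type) [Ring B] [Algebra k B] [AddCommGroup M] [Module k M]
    (n : ℕ) : Type :=
  Tpow k (Qbar k B) n →ₗ[k] M

variable (k) in
/-- `IsHochschildCoD l r bd` says that `bd` is the differential of the normalized
Hochschild cochain complex of `B` with coefficients in the bimodule `M`. -/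
def IsHochschildCoD {B M : Type} [Ring B] [Algebra k B] [AddCommGroup M] [Module k M]
    (l r : B →ₗ[k] M →ₗ[k] M)
    (bd : ∀ n : ℕ, CoHCh k B M n →ₗ[k] CoHCh k B M (n + 1)) : Prop :=
  ∀ (n : ℕ) (φ : CoHCh k B M n) (x : Fin (n + 1) → B),
    bd n φ (tp k (fun i => qbar k B (x i))) =
      l (x 0) (φ (tp k (fun i : Fin n => qbar k B (x i.succ))))
      + (∑ i : Fin n, ((-1 : ℤ) ^ ((i : ℕ) + 1)) •
          (φ (tp k (fun j => qbar k B (mulAt x i j)))))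
      + ((-1 : ℤ) ^ (n + 1)) •
          (r (x (Fin.last n)) (φ (tp k (fun i : Fin n => qbar k B (x i.castSucc)))))

variable (k) in
/-- The cohomology of a cochain complex `C 0 → C 1 → ⋯`. -/
def CoHml {C : ℕ → Type} [∀ n, AddCommGroup (C n)] [∀ n, Module k (C n)]
    (d : ∀ n : ℕ, C n →ₗ[k] C (n + 1)) : ℕ → Type
  | 0 => LinearMap.ker (d 0)
  | n + 1 => LinearMap.ker (d (n + 1)) ⧸
      (LinearMap.range (d n)).comap (LinearMap.ker (d (n + 1))).subtype

instance {C : ℕ → Type} [∀ n, AddCommGroup (C n)] [∀ n, Module k (C n)]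
    (d : ∀ n : ℕ, C n →ₗ[k] C (n + 1)) : ∀ n, AddCommGroup (CoHml k d n)
  | 0 => inferInstanceAs (AddCommGroup (LinearMap.ker (d 0)))
  | n + 1 => inferInstanceAs (AddCommGroup (LinearMap.ker (d (n + 1)) ⧸
      (LinearMap.range (d n)).comap (LinearMap.ker (d (n + 1))).subtype))

instance {C : ℕ → Type} [∀ n, AddCommGroup (C n)] [∀ n, Module k (C n)]
    (d : ∀ n : ℕ, C n →ₗ[k] C (n + 1)) : ∀ n, Module k (CoHml k d n)
  | 0 => inferInstanceAs (Module k (LinearMap.ker (d 0)))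
  | n + 1 => inferInstanceAs (Module k (LinearMap.ker (d (n + 1)) ⧸
      (LinearMap.range (d n)).comap (LinearMap.ker (d (n + 1))).subtype))

end CoHochschild

section Statement14

variable {k A H E M : Type} [CommRing k] [Ring A] [Algebra k A] [Ring H] [HopfAlgebra k H]
  [Ring E] [Algebra k E] [AddCommGroup M] [Module k M]

/-- `IsConvInverse f g` : `g` is the convolution inverse of `f` in `Hom_k(H ⊗ H, A)`. -/
def IsConvInverse (f g : H →ₗ[k] H →ₗ[k] A) : Prop :=
  ∀ (h l : H) (N M' : ℕ) (u : Fin N → Fin 2 → H) (v : Fin M' → Fin 2 → H),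
    SRep k 1 h N u → SRep k 1 l M' v →
    (∑ i, ∑ j, f (u i 0) (v j 0) * g (u i 1) (v j 1)) =
        (Coalgebra.counit (R := k) h * Coalgebra.counit (R := k) l) • (1 : A) ∧
    (∑ i, ∑ j, g (u i 0) (v j 0) * f (u i 1) (v j 1)) =
        (Coalgebra.counit (R := k) h * Coalgebra.counit (R := k) l) • (1 : A)

/-- `IsCoTheta S Bi finv θ` : for each `h ∈ H`, `θ h` is the family of maps
`θ_h^r : Hom_k(Ā^r, M) → Hom_k(Ā^r, M)` given by
`θ_h^r(φ)(𝐚) = (1 # h⁽¹⁾)⁻¹ φ(𝐚^{h⁽²⁾}) (1 # h⁽³⁾)`. -/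
def IsCoTheta (S : CrossedProduct k A H E) (Bi : Bimod k E M)
    (finv : H →ₗ[k] H →ₗ[k] A)
    (θ : H → ∀ r : ℕ, CoHCh k A M r →ₗ[k] CoHCh k A M r) : Prop :=
  ∀ (h : H) (r : ℕ) (φ : CoHCh k A M r) (a : Fin r → A) (N : ℕ)
    (u : Fin N → Fin (r + 4) → H),
    SRep k (r + 3) h N u →
    θ h r φ (tp k (fun j => qbar k A (a j))) =
      ∑ i, Bi.r (S.hE (u i (Fin.last (r + 3))))
        (Bi.l (S.ι ((finv (HopfAlgebra.antipode (R := k) (u i 1)) (u i 2)) ⊗ₜ[k]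
            HopfAlgebra.antipode (R := k) (u i 0)))
          (φ (tp k (fun j : Fin r => qbar k A (S.act (u i ⟨(j : ℕ) + 3, by omega⟩) (a j))))))

end Statement14

end HopfCrossed

/-!
Let `C` be `H` or `H ⊗ H`.  A cochain on `A` with values in `M` extends to a cochain on the
convolution algebra `Hom(C, A)` with values in `Hom(C, M)`, compatibly with the coboundaries.
Write `γ h = 1 # h`, with convolution inverse `μ`, and `α a = (h ↦ a^h)`, an algebra map
`A → Hom(H, A)` with `γ * a = α a * γ`.  Then
`θ_h φ (a₁, …, aₙ) = (μ * φ(α a₁, …, α aₙ) * γ) h`, and conjugation by `γ` turns the outer faces of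
the coboundary over `Hom(H, A)` into those over `A`, so `θ_h` is a cochain map.

Over `C = H ⊗ H` the composite `θ_l θ_h` is the same expression for `α₂ a (h ⊗ l) = (a^l)^h` and
`γ₂ (h ⊗ l) = γ h * γ l`, whereas `θ_{hl}` is the one for `β₂ a (h ⊗ l) = a^{hl}` and `γ ∘ mul`.
Since `γ₂ = f * (γ ∘ mul)` and, by the twisted module condition, `α₂ a * f = f * β₂ a`, the two
expressions are conjugate by `f` and the homotopy
`∑ (-1)^i φ(α₂ a₁, …, α₂ aᵢ, f, β₂ aᵢ₊₁, …, β₂ aₙ)` relates them.  It lives on the normalized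
complex because the weak action preserves `k · 1`.
-/

namespace HopfCrossed

section Convolution

variable {k C D P Q S U V W X Y Z : Type*} [CommSemiring k]
  [AddCommMonoid C] [Module k C] [Coalgebra k C] [AddCommMonoid D] [Module k D] [Coalgebra k D]
  [AddCommMonoid P] [Module k P] [AddCommMonoid Q] [Module k Q]
  [AddCommMonoid S] [Module k S]
  [AddCommMonoid U] [Module k U] [AddCommMonoid V] [Module k V] [AddCommMonoid W] [Module k W]
  [AddCommMonoid X] [Module k X] [AddCommMonoid Y] [Module k Y] [AddCommMonoid Z] [Module k Z]

/-- The Sweedler sum `c ↦ ∑ B (c⁽¹⁾, c⁽²⁾)` of a bilinear map `B` on a coalgebra. -/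
def sweedler : (C →ₗ[k] C →ₗ[k] P) →ₗ[k] C →ₗ[k] P :=
  LinearMap.lcomp k P Coalgebra.comul ∘ₗ (TensorProduct.lift.equiv (.id k) C C P).toLinearMap

lemma sweedler_apply (B : C →ₗ[k] C →ₗ[k] P) (c : C) :
    sweedler B c = TensorProduct.lift B (Coalgebra.comul (R := k) c) := rfl

lemma sweedler_repr (B : C →ₗ[k] C →ₗ[k] P) {c : C} {ι : Type*} (𝓡 : Coalgebra.Repr k c ι) :
    sweedler B c = ∑ i ∈ 𝓡.index, B (𝓡.left i) (𝓡.right i) := by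
  simp [sweedler_apply, ← 𝓡.eq]

lemma comp_sweedler (g : P →ₗ[k] Q) (B : C →ₗ[k] C →ₗ[k] P) :
    g ∘ₗ sweedler B = sweedler (B.compr₂ g) := by
  ext c
  simp [sweedler_repr _ (Coalgebra.Repr.arbitrary k c)]

lemma sweedler_sweedler (T : C →ₗ[k] C →ₗ[k] C →ₗ[k] P) :
    sweedler (sweedler T) = sweedler (sweedler ∘ₗ T) := by
  let T' : C ⊗[k] (C ⊗[k] C) →ₗ[k] P :=
    TensorProduct.lift ((TensorProduct.lift.equiv (.id k) C C P).toLinearMap ∘ₗ T)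
  have left : TensorProduct.lift (sweedler T) =
      T' ∘ₗ (TensorProduct.assoc k C C C).toLinearMap ∘ₗ Coalgebra.comul.rTensor C := by
    ext x y
    have 𝓡 := Coalgebra.Repr.arbitrary k x
    simp [sweedler_repr _ 𝓡, ← 𝓡.eq, T', TensorProduct.sum_tmul]
  have right : TensorProduct.lift (sweedler ∘ₗ T) = T' ∘ₗ Coalgebra.comul.lTensor C := by
    ext x y
    rfl
  ext c
  simp [sweedler_apply, left, right]

lemma sweedler_of_counit_left {B : C →ₗ[k] C →ₗ[k] P} (g : C →ₗ[k] P)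
    (h : ∀ x y, B x y = Coalgebra.counit (R := k) x • g y) : sweedler B = g := by
  have lift_eq : TensorProduct.lift B =
      g ∘ₗ (TensorProduct.lid k C).toLinearMap ∘ₗ Coalgebra.counit.rTensor C := by
    ext x y
    simp [h]
  ext c
  simp [sweedler_apply, lift_eq]

lemma sweedler_of_counit_right {B : C →ₗ[k] C →ₗ[k] P} (g : C →ₗ[k] P)
    (h : ∀ x y, B x y = Coalgebra.counit (R := k) y • g x) : sweedler B = g := by
  have lift_eq : TensorProduct.lift B =
      g ∘ₗ (TensorProduct.rid k C).toLinearMap ∘ₗ Coalgebra.counit.lTensor C := by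
    ext x y
    simp [h]
  ext c
  simp [sweedler_apply, lift_eq]

/-- The convolution `c ↦ ∑ B (F c⁽¹⁾, G c⁽²⁾)` of two linear maps on a coalgebra along a bilinear
pairing `B` of their codomains. For the multiplication of an algebra it is the product of Mathlib's
`WithConv`; general pairings are needed because cochains take values in a bimodule. -/
def conv (B : X →ₗ[k] Y →ₗ[k] Z) : (C →ₗ[k] X) →ₗ[k] (C →ₗ[k] Y) →ₗ[k] (C →ₗ[k] Z) :=
  LinearMap.mk₂ k (fun F G => sweedler (B.compl₁₂ F G))
    (fun _ _ _ => by rw [← map_add]; congr 1; ext; simp)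
    (fun _ _ _ => by rw [← map_smul]; congr 1; ext; simp)
    (fun _ _ _ => by rw [← map_add]; congr 1; ext; simp)
    (fun _ _ _ => by rw [← map_smul]; congr 1; ext; simp)

lemma conv_apply (B : X →ₗ[k] Y →ₗ[k] Z) (F : C →ₗ[k] X) (G : C →ₗ[k] Y) :
    conv B F G = sweedler (B.compl₁₂ F G) := rfl

lemma conv_repr (B : X →ₗ[k] Y →ₗ[k] Z) (F : C →ₗ[k] X) (G : C →ₗ[k] Y) {c : C} {ι : Type*}
    (𝓡 : Coalgebra.Repr k c ι) :
    conv B F G c = ∑ i ∈ 𝓡.index, B (F (𝓡.left i)) (G (𝓡.right i)) := by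
  simp [conv_apply, sweedler_repr _ 𝓡]

lemma conv_congr {B : X →ₗ[k] Y →ₗ[k] Z} {F : C →ₗ[k] X} {G : C →ₗ[k] Y}
    {B' : V →ₗ[k] W →ₗ[k] Z} {F' : C →ₗ[k] V} {G' : C →ₗ[k] W}
    (h : ∀ x y, B (F x) (G y) = B' (F' x) (G' y)) : conv B F G = conv B' F' G' :=
  congrArg sweedler (by ext x y; exact h x y)

lemma comp_conv (g : Z →ₗ[k] P) (B : X →ₗ[k] Y →ₗ[k] Z) (F : C →ₗ[k] X) (G : C →ₗ[k] Y) :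
    g ∘ₗ conv B F G = conv (B.compr₂ g) F G :=
  comp_sweedler g _

lemma conv_comp_coalgHom (B : X →ₗ[k] Y →ₗ[k] Z) (F : D →ₗ[k] X) (G : D →ₗ[k] Y)
    (g : C →ₗc[k] D) :
    conv B F G ∘ₗ g.toLinearMap = conv B (F ∘ₗ g.toLinearMap) (G ∘ₗ g.toLinearMap) := by
  ext c
  have 𝓡 := Coalgebra.Repr.arbitrary k c
  simp [conv_repr _ _ _ 𝓡, conv_repr _ _ _ (𝓡.induced g)]

lemma conv_groupLike (B : X →ₗ[k] Y →ₗ[k] Z) (F : C →ₗ[k] X) (G : C →ₗ[k] Y) {g : C}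
    (hg : IsGroupLikeElem k g) : conv B F G g = B (F g) (G g) := by
  simp [conv_apply, sweedler_apply, hg.comul_eq_tmul_self]

lemma conv_assoc {B₁ : X →ₗ[k] Y →ₗ[k] Z} {B₂ : V →ₗ[k] W →ₗ[k] X}
    {B₃ : V →ₗ[k] U →ₗ[k] Z} {B₄ : W →ₗ[k] Y →ₗ[k] U}
    (h : ∀ x y z, B₁ (B₂ x y) z = B₃ x (B₄ y z))
    (F : C →ₗ[k] V) (G : C →ₗ[k] W) (K : C →ₗ[k] Y) :
    conv B₁ (conv B₂ F G) K = conv B₃ F (conv B₄ G K) := by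
  let T : C →ₗ[k] C →ₗ[k] C →ₗ[k] Z := (B₂.compl₁₂ F G).compr₂ (B₁.compl₂ K)
  have left : B₁.compl₁₂ (conv B₂ F G) K = sweedler T := by
    ext x y
    have 𝓡 := Coalgebra.Repr.arbitrary k x
    simp [T, sweedler_repr _ 𝓡, conv_repr _ _ _ 𝓡]
  have right : B₃.compl₁₂ F (conv B₄ G K) = sweedler ∘ₗ T := by
    ext x y
    have 𝓡 := Coalgebra.Repr.arbitrary k y
    simp [T, sweedler_repr _ 𝓡, conv_repr _ _ _ 𝓡, h]
  rw [conv_apply, conv_apply B₃, left, right, sweedler_sweedler]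

/-- Both sides read `c⁽¹⁾ ⊗ c⁽²⁾ ⊗ c⁽³⁾ ⊗ c⁽⁴⁾`, bracketed as `(12)(34)` and as `(1(23))4`. -/
lemma conv_conv_conv {B₁ : X →ₗ[k] Y →ₗ[k] Z} {B₂ : V →ₗ[k] W →ₗ[k] X} {B₃ : P →ₗ[k] Q →ₗ[k] Y}
    {B₄ : U →ₗ[k] Q →ₗ[k] Z} {B₅ : V →ₗ[k] S →ₗ[k] U} {B₆ : W →ₗ[k] P →ₗ[k] S}
    (h : ∀ v w x y, B₁ (B₂ v w) (B₃ x y) = B₄ (B₅ v (B₆ w x)) y)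
    (F : C →ₗ[k] V) (G : C →ₗ[k] W) (K : C →ₗ[k] P) (L : C →ₗ[k] Q) :
    conv B₁ (conv B₂ F G) (conv B₃ K L) = conv B₄ (conv B₅ F (conv B₆ G K)) L := by
  let B₇ : V ⊗[k] W →ₗ[k] P →ₗ[k] U :=
    TensorProduct.lift ((LinearMap.llcomp k P S U).compl₁₂ B₅ B₆)
  have inner : conv B₅ F (conv B₆ G K) = conv B₇ (conv (TensorProduct.mk k V W) F G) K :=
    (conv_assoc (fun _ _ _ => rfl) F G K).symm
  have outer : conv B₂ F G = TensorProduct.lift B₂ ∘ₗ conv (TensorProduct.mk k V W) F G := by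
    rw [comp_conv]; congr 1
  have pairing : ∀ t x y, B₄ (B₇ t x) y = (B₁ ∘ₗ TensorProduct.lift B₂) t (B₃ x y) :=
    fun t x y => by
      induction t with
      | zero => simp
      | tmul v w => exact (h v w x y).symm
      | add s t hs ht => simp only [map_add, LinearMap.add_apply, hs, ht]
  rw [inner, outer, conv_assoc (B₃ := B₁ ∘ₗ TensorProduct.lift B₂) (B₄ := B₃) pairing]
  exact conv_congr fun _ _ => rfl

/-- The linear map `c ↦ ε(c) x`, a unit for convolution. -/
def convConst : X →ₗ[k] C →ₗ[k] X := LinearMap.smulRightₗ (Coalgebra.counit (R := k) (A := C))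

lemma convConst_apply (x : X) (c : C) :
    convConst (k := k) x c = Coalgebra.counit (R := k) c • x := rfl

lemma comp_convConst (g : X →ₗ[k] Y) (x : X) :
    g ∘ₗ (convConst x : C →ₗ[k] X) = convConst (g x) := by
  ext c
  simp [convConst_apply]

lemma convConst_comp_coalgHom (x : X) (g : C →ₗc[k] D) :
    (convConst x : D →ₗ[k] X) ∘ₗ g.toLinearMap = convConst x := by
  ext c
  simp [convConst_apply]

lemma conv_convConst_left (B : X →ₗ[k] Y →ₗ[k] Z) (x : X) (G : C →ₗ[k] Y) :
    conv B (convConst x) G = B x ∘ₗ G :=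
  sweedler_of_counit_left _ fun _ _ => by simp [convConst_apply]

lemma conv_convConst_right (B : X →ₗ[k] Y →ₗ[k] Z) (F : C →ₗ[k] X) (y : Y) :
    conv B F (convConst y) = B.flip y ∘ₗ F :=
  sweedler_of_counit_right _ fun _ _ => by simp [convConst_apply]

end Convolution

section TensorPower

variable {k N V W X : Type} [CommRing k] [AddCommGroup V] [Module k V] [AddCommGroup W]
  [Module k W] [AddCommGroup X] [Module k X] [AddCommGroup N] [Module k N]

/-- The unit `1` of `Tpow k V 0 = k`. -/
def Tpow.nil : Tpow k V 0 := (1 : k)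

/-- The tensor `v ⊗ t`, as a bilinear map. -/
def Tpow.cons {n : ℕ} : V →ₗ[k] Tpow k V n →ₗ[k] Tpow k V (n + 1) :=
  TensorProduct.mk k V (Tpow k V n)

/-- The universal property of `V^{⊗(n+1)} = V ⊗ V^{⊗n}`. -/
def Tpow.lift {n : ℕ} : (V →ₗ[k] Tpow k V n →ₗ[k] N) ≃ₗ[k] (Tpow k V (n + 1) →ₗ[k] N) :=
  TensorProduct.lift.equiv (.id k) V (Tpow k V n) N

@[simp]
lemma Tpow.lift_cons {n : ℕ} (B : V →ₗ[k] Tpow k V n →ₗ[k] N) (v : V) (t : Tpow k V n) :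
    Tpow.lift B (Tpow.cons v t) = B v t :=
  TensorProduct.lift.tmul' (σ₁₂ := .id k) v t

@[simp]
lemma Tpow.lift_symm_apply {n : ℕ} (φ : Tpow k V (n + 1) →ₗ[k] N) (v : V) (t : Tpow k V n) :
    Tpow.lift.symm φ v t = φ (Tpow.cons v t) := rfl

lemma tp_zero (v : Fin 0 → V) : tp k v = Tpow.nil := rfl

lemma tp_succ {n : ℕ} (v : Fin (n + 1) → V) : tp k v = Tpow.cons (v 0) (tp k (Fin.tail v)) := rfl

lemma tp_cons {n : ℕ} (x : V) (v : Fin n → V) :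
    tp k (Fin.cons x v : Fin (n + 1) → V) = Tpow.cons x (tp k v) := by
  rw [tp_succ, Fin.cons_zero, Fin.tail_cons]

lemma Tpow.hom_ext_zero {f g : Tpow k V 0 →ₗ[k] N} (h : f Tpow.nil = g Tpow.nil) : f = g :=
  LinearMap.ext_ring (R := k) h

lemma Tpow.hom_ext_succ {n : ℕ} {f g : Tpow k V (n + 1) →ₗ[k] N}
    (h : ∀ v t, f (Tpow.cons v t) = g (Tpow.cons v t)) : f = g :=
  TensorProduct.ext' (M := V) (N := Tpow k V n) h

lemma Tpow.hom_ext {n : ℕ} {f g : Tpow k V n →ₗ[k] N} (h : ∀ v, f (tp k v) = g (tp k v)) :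
    f = g := by
  induction n with
  | zero => exact Tpow.hom_ext_zero (h Fin.elim0)
  | succ n ih =>
    refine Tpow.hom_ext_succ fun v t => ?_
    have curried_eq : Tpow.lift.symm f v = Tpow.lift.symm g v := ih fun w => by
      simpa only [tp_cons, Tpow.lift_symm_apply] using h (Fin.cons v w)
    exact congr($curried_eq t)

lemma span_range_tp (n : ℕ) :
    Submodule.span k (Set.range (tp k : (Fin n → V) → Tpow k V n)) = ⊤ := by
  have mkQ_eq_zero : (Submodule.span k (Set.range (tp k : (Fin n → V) → Tpow k V n))).mkQ = 0 :=
    Tpow.hom_ext fun v => by simpa using Submodule.subset_span (Set.mem_range_self v)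
  rw [← Submodule.ker_mkQ (Submodule.span k _), mkQ_eq_zero, LinearMap.ker_zero]

lemma smul_tp {n : ℕ} (a : k) (v : Fin (n + 1) → V) :
    a • tp k v = tp k (Fin.cons (a • v 0) (Fin.tail v) : Fin (n + 1) → V) := by
  rw [tp_cons, tp_succ, map_smul, LinearMap.smul_apply]

lemma exists_eq_sum_tp {n : ℕ} (t : Tpow k V (n + 1)) :
    ∃ (m : ℕ) (u : Fin m → Fin (n + 1) → V), t = ∑ i, tp k (u i) := by
  have ht : t ∈ Submodule.span k (Set.range (tp k : (Fin (n + 1) → V) → Tpow k V (n + 1))) :=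
    span_range_tp (k := k) (V := V) (n + 1) ▸ Submodule.mem_top
  obtain ⟨m, a, v, rfl⟩ := Submodule.mem_span_set'.mp ht
  choose w hw using fun i => (v i).2
  exact ⟨m, fun i => Fin.cons (a i • w i 0) (Fin.tail (w i)), by simp only [← smul_tp, hw]⟩

/-- The map `q^{⊗n}`. -/
def Tpow.map (q : V →ₗ[k] W) : ∀ n : ℕ, Tpow k V n →ₗ[k] Tpow k W n
  | 0 => (.id : k →ₗ[k] k)
  | n + 1 => Tpow.lift (Tpow.cons.compl₁₂ q (Tpow.map q n))

@[simp]
lemma Tpow.map_nil (q : V →ₗ[k] W) : Tpow.map q 0 Tpow.nil = Tpow.nil := rfl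

@[simp]
lemma Tpow.map_cons (q : V →ₗ[k] W) (n : ℕ) (v : V) (t : Tpow k V n) :
    Tpow.map q (n + 1) (Tpow.cons v t) = Tpow.cons (q v) (Tpow.map q n t) :=
  Tpow.lift_cons _ _ _

lemma Tpow.map_tp (q : V →ₗ[k] W) {n : ℕ} (v : Fin n → V) :
    Tpow.map q n (tp k v) = tp k fun i => q (v i) := by
  induction n with
  | zero => rfl
  | succ n ih => rw [tp_succ, Tpow.map_cons, ih]; rfl

lemma Tpow.map_id (n : ℕ) : Tpow.map (.id : V →ₗ[k] V) n = .id :=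
  Tpow.hom_ext fun v => by simp [Tpow.map_tp]

lemma Tpow.map_comp (p : W →ₗ[k] X) (q : V →ₗ[k] W) (n : ℕ) :
    Tpow.map (p ∘ₗ q) n = Tpow.map p n ∘ₗ Tpow.map q n :=
  Tpow.hom_ext fun v => by simp [Tpow.map_tp]

lemma Tpow.comp_map_cancel {q : V →ₗ[k] W} (hq : Function.Surjective q) {n : ℕ}
    {f g : Tpow k W n →ₗ[k] N} (h : f ∘ₗ Tpow.map q n = g ∘ₗ Tpow.map q n) : f = g :=
  Tpow.hom_ext fun w => by
    choose v hv using fun i => hq (w i)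
    simpa [Tpow.map_tp, hv] using congr($h (tp k v))

/-- The identification `V ⊗ (V ⊗ k) = V ⊗ V`. -/
def Tpow.two : Tpow k V 2 →ₗ[k] V ⊗[k] V := (TensorProduct.rid k V).toLinearMap.lTensor V

lemma Tpow.two_tp (v : Fin 2 → V) : Tpow.two (tp k v) = v 0 ⊗ₜ[k] v 1 :=
  congrArg (v 0 ⊗ₜ[k] ·) (one_smul k (v 1))

end TensorPower

section IteratedComultiplication

variable {k C V W X Y Z : Type} [CommRing k] [AddCommGroup C] [Module k C] [Coalgebra k C]
  [AddCommGroup V] [Module k V] [AddCommGroup W] [Module k W] [AddCommGroup X] [Module k X]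
  [AddCommGroup Y] [Module k Y] [AddCommGroup Z] [Module k Z]

lemma itComul_succ (n : ℕ) :
    itComul k (n + 1) = conv Tpow.cons (.id : C →ₗ[k] C) (itComul k n) := by
  ext c
  have 𝓡 := Coalgebra.Repr.arbitrary k c
  rw [conv_repr _ _ _ 𝓡]
  refine (congrArg (TensorProduct.map _ _) 𝓡.eq.symm).trans ?_
  rw [map_sum]
  rfl

lemma itComul_groupLike {g : C} (hg : IsGroupLikeElem k g) (n : ℕ) :
    itComul k n g = tp k fun _ => g := by
  induction n with
  | zero => rfl
  | succ n ih => rw [itComul_succ, conv_groupLike _ _ _ hg, ih]; rfl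

lemma exists_sRep (n : ℕ) (c : C) : ∃ (m : ℕ) (u : Fin m → Fin (n + 1) → C), SRep k n c m u :=
  exists_eq_sum_tp (itComul k n c)

lemma conv_comp_itComul (B : X →ₗ[k] Y →ₗ[k] Z) (F : C →ₗ[k] X) {n : ℕ}
    (G : Tpow k C (n + 1) →ₗ[k] Y) :
    conv B F (G ∘ₗ itComul k n) = Tpow.lift (B.compl₁₂ F G) ∘ₗ itComul k (n + 1) := by
  rw [itComul_succ, comp_conv]
  exact conv_congr fun _ _ => rfl

lemma Tpow.two_itComul (c : C) : Tpow.two (itComul k 1 c) = Coalgebra.comul (R := k) c := by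
  have 𝓡 := Coalgebra.Repr.arbitrary k c
  rw [itComul_succ, conv_repr _ _ _ 𝓡, map_sum, ← 𝓡.eq]
  exact Finset.sum_congr rfl fun i _ => Tpow.two_tp ![𝓡.left i, 𝓡.right i]

/-- A representation of `c⁽¹⁾ ⊗ c⁽²⁾` in the format of Mathlib. -/
def SRep.repr {m : ℕ} {c : C} {u : Fin m → Fin 2 → C} (hu : SRep k 1 c m u) :
    Coalgebra.Repr k c (Fin m) where
  index := .univ
  left i := u i 0
  right i := u i 1
  eq := by simp [← Tpow.two_itComul, show itComul k 1 c = _ from hu, Tpow.two_tp]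

lemma SRep.conv_conv {m : ℕ} {c : C} {u : Fin m → Fin 3 → C} (hu : SRep k 2 c m u)
    (B₁ : X →ₗ[k] Y →ₗ[k] Z) (B₂ : V →ₗ[k] W →ₗ[k] Y) (F : C →ₗ[k] X) (G : C →ₗ[k] V)
    (K : C →ₗ[k] W) :
    conv B₁ F (conv B₂ G K) c = ∑ i, B₁ (F (u i 0)) (B₂ (G (u i 1)) (K (u i 2))) := by
  have inner : conv B₂ G K = (TensorProduct.lift (B₂.compl₁₂ G K) ∘ₗ Tpow.two) ∘ₗ itComul k 1 := by
    ext y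
    exact congrArg (TensorProduct.lift (B₂.compl₁₂ G K)) (Tpow.two_itComul y).symm
  rw [inner, conv_comp_itComul, LinearMap.comp_apply, show itComul k 2 c = _ from hu, map_sum]
  refine Finset.sum_congr rfl fun i _ => congrArg (B₁ (F (u i 0))) ?_
  exact congrArg (TensorProduct.lift (B₂.compl₁₂ G K)) (Tpow.two_tp fun j => u i j.succ)

end IteratedComultiplication

section Coboundary

variable {k N N' V V' X X' : Type} [CommRing k] [AddCommGroup V] [Module k V]
  [AddCommGroup V'] [Module k V']
  [AddCommGroup X] [Module k X] [AddCommGroup X'] [Module k X'] [AddCommGroup N] [Module k N]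
  [AddCommGroup N'] [Module k N']

/-- The left action `(x · g) y = g (y x)` on `Hom_k(X, N)`. -/
def shiftLeft (m : X →ₗ[k] X →ₗ[k] X) : X →ₗ[k] (X →ₗ[k] N) →ₗ[k] (X →ₗ[k] N) :=
  (LinearMap.llcomp k X X N).flip ∘ₗ m.flip

/-- The right action `(g · x) y = g y · x` on `Hom_k(X, N)`, written as `x ↦ g ↦ g · x`. -/
def shiftRight (r : X →ₗ[k] N →ₗ[k] N) : X →ₗ[k] (X →ₗ[k] N) →ₗ[k] (X →ₗ[k] N) :=
  LinearMap.llcomp k X N N ∘ₗ r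

@[simp]
lemma shiftLeft_apply (m : X →ₗ[k] X →ₗ[k] X) (x : X) (g : X →ₗ[k] N) (y : X) :
    shiftLeft m x g y = g (m y x) := rfl

@[simp]
lemma shiftRight_apply (r : X →ₗ[k] N →ₗ[k] N) (x : X) (g : X →ₗ[k] N) (y : X) :
    shiftRight r x g y = r x (g y) := rfl

/-- The cochain `t ↦ x ↦ φ (x ⊗ t)` with values in `Hom_k(X, N)`. -/
def curryHead {n : ℕ} : (Tpow k X (n + 1) →ₗ[k] N) →ₗ[k] (Tpow k X n →ₗ[k] X →ₗ[k] N) :=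
  LinearMap.lflip.toLinearMap ∘ₗ Tpow.lift.symm.toLinearMap

@[simp]
lemma curryHead_apply {n : ℕ} (φ : Tpow k X (n + 1) →ₗ[k] N) (t : Tpow k X n) (x : X) :
    curryHead φ t x = φ (Tpow.cons x t) := rfl

/-- The unnormalized Hochschild coboundary of `X`, with multiplication `m`, and coefficients in `N`,
with left and right actions `l` and `r`. It is defined by recursion on the degree, viewing an
`(n+1)`-cochain with values in `N` as an `n`-cochain with values in `Hom_k(X, N)`; neither
associativity nor the bimodule laws play a part in the definition. -/
def coboundary (m : X →ₗ[k] X →ₗ[k] X) : ∀ (n : ℕ) {N : Type} [AddCommGroup N] [Module k N],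
    (X →ₗ[k] N →ₗ[k] N) → (X →ₗ[k] N →ₗ[k] N) →
    (Tpow k X n →ₗ[k] N) →ₗ[k] (Tpow k X (n + 1) →ₗ[k] N)
  | 0, _, _, _, l, r => Tpow.lift.toLinearMap ∘ₗ
      ((LinearMap.llcomp k _ _ _ ∘ₗ l).flip - (LinearMap.llcomp k _ _ _ ∘ₗ r).flip)
  | n + 1, _, _, _, l, r => Tpow.lift.toLinearMap ∘ₗ
      ((LinearMap.llcomp k _ _ _ ∘ₗ l).flip -
        LinearMap.lflip.toLinearMap ∘ₗ coboundary m n (shiftLeft m) (shiftRight r) ∘ₗ curryHead)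

lemma coboundary_zero_cons (m : X →ₗ[k] X →ₗ[k] X) (l r : X →ₗ[k] N →ₗ[k] N)
    (φ : Tpow k X 0 →ₗ[k] N) (x : X) (t : Tpow k X 0) :
    coboundary m 0 l r φ (Tpow.cons x t) = l x (φ t) - r x (φ t) := by
  simp [coboundary]

lemma coboundary_succ_cons (m : X →ₗ[k] X →ₗ[k] X) {n : ℕ} (l r : X →ₗ[k] N →ₗ[k] N)
    (φ : Tpow k X (n + 1) →ₗ[k] N) (x : X) (t : Tpow k X (n + 1)) :
    coboundary m (n + 1) l r φ (Tpow.cons x t) =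
      l x (φ t) - coboundary m n (shiftLeft m) (shiftRight r) (curryHead φ) t x := by
  simp [coboundary]

lemma coboundary_natural {m : X →ₗ[k] X →ₗ[k] X} {m' : X' →ₗ[k] X' →ₗ[k] X'}
    {p : X' →ₗ[k] X} (hp : ∀ x y, p (m' x y) = m (p x) (p y)) {n : ℕ}
    {l r : X →ₗ[k] N →ₗ[k] N} {l' r' : X' →ₗ[k] N' →ₗ[k] N'} {T : N →ₗ[k] N'}
    (hl : ∀ x g, T (l (p x) g) = l' x (T g)) (hr : ∀ x g, T (r (p x) g) = r' x (T g))
    (φ : Tpow k X n →ₗ[k] N) :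
    coboundary m' n l' r' (T ∘ₗ φ ∘ₗ Tpow.map p n) =
      T ∘ₗ coboundary m n l r φ ∘ₗ Tpow.map p (n + 1) := by
  induction n generalizing N N' with
  | zero => exact Tpow.hom_ext_succ fun x t => by simp [coboundary_zero_cons, hl, hr]
  | succ n ih =>
    let T' : (X →ₗ[k] N) →ₗ[k] (X' →ₗ[k] N') :=
      LinearMap.llcomp k X' N N' T ∘ₗ LinearMap.lcomp k N p
    have curry : curryHead (T ∘ₗ φ ∘ₗ Tpow.map p (n + 1)) = T' ∘ₗ curryHead φ ∘ₗ Tpow.map p n := by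
      ext t x
      simp [T']
    have natural :
        coboundary m' n (shiftLeft m') (shiftRight r') (T' ∘ₗ curryHead φ ∘ₗ Tpow.map p n) =
        T' ∘ₗ coboundary m n (shiftLeft m) (shiftRight r) (curryHead φ) ∘ₗ Tpow.map p (n + 1) :=
      ih (fun x g => by ext; simp [T', hp]) (fun x g => by ext; simp [T', hr]) _
    refine Tpow.hom_ext_succ fun x t => ?_
    simp [coboundary_succ_cons, curry, natural, hl, T']

lemma coboundary_comp {m : X →ₗ[k] X →ₗ[k] X} {n : ℕ} {l r : X →ₗ[k] N →ₗ[k] N}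
    {l' r' : X →ₗ[k] N' →ₗ[k] N'} {T : N →ₗ[k] N'} (hl : ∀ x g, T (l x g) = l' x (T g))
    (hr : ∀ x g, T (r x g) = r' x (T g)) (φ : Tpow k X n →ₗ[k] N) :
    coboundary m n l' r' (T ∘ₗ φ) = T ∘ₗ coboundary m n l r φ := by
  simpa only [Tpow.map_id, LinearMap.comp_id] using
    coboundary_natural (p := .id) (fun _ _ => rfl) hl hr φ

lemma coboundary_tp {A : Type} [Ring A] [Algebra k A] {n : ℕ} (l r : A →ₗ[k] N →ₗ[k] N)
    (φ : Tpow k A n →ₗ[k] N) (x : Fin (n + 1) → A) :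
    coboundary (LinearMap.mul k A) n l r φ (tp k x) =
      l (x 0) (φ (tp k fun i => x i.succ))
      + (∑ i : Fin n, (-1 : ℤ) ^ ((i : ℕ) + 1) • φ (tp k (mulAt x i)))
      + (-1 : ℤ) ^ (n + 1) • r (x (Fin.last n)) (φ (tp k fun i => x i.castSucc)) := by
  induction n generalizing N with
  | zero =>
    rw [tp_succ, coboundary_zero_cons]
    simp [sub_eq_add_neg, tp_zero]
  | succ n ih =>
    have mulAt_zero : tp k (mulAt x 0) = Tpow.cons (x 0 * x 1) (tp k fun i => x i.succ.succ) := by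
      rw [tp_succ]
      congr 2
    have mulAt_succ (i : Fin n) :
        tp k (mulAt x i.succ) = Tpow.cons (x 0) (tp k (mulAt (Fin.tail x) i)) := by
      rw [tp_succ]
      congr 2
      ext j
      simp [mulAt, Fin.tail]
    have castSucc : tp k (fun i : Fin (n + 1) => x i.castSucc) =
        Tpow.cons (x 0) (tp k fun i => Fin.tail x i.castSucc) := rfl
    have tail : (fun i => x i.succ) = Fin.tail x := rfl
    rw [tp_succ, coboundary_succ_cons, ih, Fin.sum_univ_succ, mulAt_zero]
    simp only [Fin.tail, Fin.succ_zero_eq_one, pow_succ, mul_neg, mul_one, neg_smul,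
      Finset.sum_neg_distrib, Fin.succ_last, LinearMap.add_apply, shiftLeft_apply,
      LinearMap.mul_apply_apply, curryHead_apply, LinearMap.neg_apply, LinearMap.coe_sum,
      LinearMap.coe_smul, Finset.sum_apply, Pi.smul_apply, shiftRight_apply, Fin.coe_ofNat_eq_mod,
      Nat.zero_mod, pow_zero, one_smul, Fin.val_succ, neg_neg, mulAt_succ, castSucc]
    rw [tail]
    abel

/-- The chain homotopy `∑ ± α a₁ ⊗ ⋯ ⊗ α aᵢ ⊗ f ⊗ β aᵢ₊₁ ⊗ ⋯ ⊗ β aₙ` between two algebra maps `α`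
and `β` conjugate by `f`. -/
def insertion (f : X) (α β : V →ₗ[k] X) : ∀ n : ℕ, Tpow k V n →ₗ[k] Tpow k X (n + 1)
  | 0 => Tpow.cons f ∘ₗ Tpow.map β 0
  | n + 1 => Tpow.cons f ∘ₗ Tpow.map β (n + 1) -
      Tpow.lift (Tpow.cons.compl₁₂ α (insertion f α β n))

@[simp]
lemma insertion_zero (f : X) (α β : V →ₗ[k] X) (t : Tpow k V 0) :
    insertion f α β 0 t = Tpow.cons f (Tpow.map β 0 t) := rfl

@[simp]
lemma insertion_cons (f : X) (α β : V →ₗ[k] X) {n : ℕ} (a : V) (t : Tpow k V n) :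
    insertion f α β (n + 1) (Tpow.cons a t) =
      Tpow.cons f (Tpow.cons (β a) (Tpow.map β n t)) - Tpow.cons (α a) (insertion f α β n t) := by
  simp [insertion]

lemma map_comp_insertion {q : X →ₗ[k] X'} {p : V →ₗ[k] V'} {f : X} {α β : V →ₗ[k] X}
    {α' β' : V' →ₗ[k] X'} (hα : ∀ a, q (α a) = α' (p a)) (hβ : ∀ a, q (β a) = β' (p a)) (n : ℕ) :
    Tpow.map q (n + 1) ∘ₗ insertion f α β n = insertion (q f) α' β' n ∘ₗ Tpow.map p n := by
  induction n with
  | zero => exact Tpow.hom_ext_zero (by simp)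
  | succ n ih =>
    refine Tpow.hom_ext_succ fun a t => ?_
    have hβt : Tpow.map q n (Tpow.map β n t) = Tpow.map β' n (Tpow.map p n t) := by
      rw [← LinearMap.comp_apply, ← LinearMap.comp_apply, ← Tpow.map_comp, ← Tpow.map_comp,
        show q ∘ₗ β = β' ∘ₗ p from LinearMap.ext hβ]
    have ht := LinearMap.congr_fun ih t
    simp only [LinearMap.comp_apply] at ht
    simp [hα, hβ, hβt, ht]

variable {mV : V →ₗ[k] V →ₗ[k] V} {m : X →ₗ[k] X →ₗ[k] X} {f : X} {α β : V →ₗ[k] X}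

lemma coboundary_insertion_zero (l r : X →ₗ[k] N →ₗ[k] N) (φ : Tpow k X 0 →ₗ[k] N) :
    coboundary m 0 l r φ ∘ₗ insertion f α β 0 =
      l f ∘ₗ φ ∘ₗ Tpow.map β 0 - r f ∘ₗ φ ∘ₗ Tpow.map α 0 := by
  refine Tpow.hom_ext_zero ?_
  simp [coboundary_zero_cons]

lemma coboundary_insertion (hα : ∀ a b, α (mV a b) = m (α a) (α b))
    (hβ : ∀ a b, β (mV a b) = m (β a) (β b)) (hf : ∀ a, m (α a) f = m f (β a))
    {n : ℕ} (l r : X →ₗ[k] N →ₗ[k] N) (φ : Tpow k X (n + 1) →ₗ[k] N) :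
    coboundary mV n (l ∘ₗ α) (r ∘ₗ β) (φ ∘ₗ insertion f α β n) +
        coboundary m (n + 1) l r φ ∘ₗ insertion f α β (n + 1) =
      l f ∘ₗ φ ∘ₗ Tpow.map β (n + 1) - r f ∘ₗ φ ∘ₗ Tpow.map α (n + 1) := by
  induction n generalizing N with
  | zero =>
    refine Tpow.hom_ext_succ fun a t => ?_
    have map_zero : Tpow.map α 0 t = Tpow.map β 0 t := rfl
    simp only [LinearMap.add_apply, coboundary_zero_cons, LinearMap.coe_comp, Function.comp_apply,
      insertion_zero, insertion_cons, map_sub, coboundary_succ_cons, LinearMap.sub_apply,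
      shiftLeft_apply, curryHead_apply, shiftRight_apply, hf, Tpow.map_cons, map_zero]
    abel
  | succ n ih =>
    let T : (X →ₗ[k] X →ₗ[k] N) →ₗ[k] (V →ₗ[k] N) :=
      LinearMap.llcomp k V _ N (LinearMap.applyₗ f) ∘ₗ LinearMap.lcomp k _ β
    have curry : curryHead (φ ∘ₗ insertion f α β (n + 1)) =
        T ∘ₗ curryHead (curryHead φ) ∘ₗ Tpow.map β n -
          LinearMap.lcomp k N α ∘ₗ curryHead φ ∘ₗ insertion f α β n := by
      ext t a
      simp [T]
    have natural_T : coboundary mV n (shiftLeft mV) (shiftRight (r ∘ₗ β))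
          (T ∘ₗ curryHead (curryHead φ) ∘ₗ Tpow.map β n) =
        T ∘ₗ coboundary m n (shiftLeft m) (shiftRight (shiftRight r)) (curryHead (curryHead φ)) ∘ₗ
          Tpow.map β (n + 1) :=
      coboundary_natural hβ (fun _ _ => by ext; simp [T, hβ]) (fun _ _ => by ext; simp [T]) _
    have natural_α : coboundary mV n (shiftLeft mV) (shiftRight (r ∘ₗ β))
          (LinearMap.lcomp k N α ∘ₗ curryHead φ ∘ₗ insertion f α β n) =
        LinearMap.lcomp k N α ∘ₗ coboundary mV n (shiftLeft m ∘ₗ α) (shiftRight r ∘ₗ β)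
          (curryHead φ ∘ₗ insertion f α β n) :=
      coboundary_comp (fun _ _ => by ext; simp [hα]) (fun _ _ => by ext; simp) _
    refine Tpow.hom_ext_succ fun a t => ?_
    have hyp := congr($(ih (shiftLeft m) (shiftRight r) (curryHead φ)) t (α a))
    simp only [LinearMap.add_apply, LinearMap.coe_comp, Function.comp_apply, LinearMap.sub_apply,
      shiftLeft_apply, hf, curryHead_apply, shiftRight_apply] at hyp
    simp only [LinearMap.add_apply, coboundary_succ_cons, LinearMap.coe_comp, Function.comp_apply,
      curry, map_sub, natural_T, natural_α, LinearMap.sub_apply, LinearMap.llcomp_apply,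
      LinearMap.lcomp_apply, LinearMap.applyₗ_apply_apply, insertion_cons, shiftLeft_apply,
      curryHead_apply, Tpow.map_cons, T]
    linear_combination (norm := abel) hyp

end Coboundary

section ConvolutionCochains

variable {k C D N V W X Y : Type} [CommRing k] [AddCommGroup C] [Module k C] [Coalgebra k C]
  [AddCommGroup D] [Module k D] [Coalgebra k D] [AddCommGroup V] [Module k V]
  [AddCommGroup W] [Module k W] [AddCommGroup X] [Module k X] [AddCommGroup Y] [Module k Y]
  [AddCommGroup N] [Module k N]

/-- The convolution product `F₁ ⊗ ⋯ ⊗ Fₙ ↦ (c ↦ F₁ c⁽¹⁾ ⊗ ⋯ ⊗ Fₙ c⁽ⁿ⁾)`. -/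
def convPow : ∀ n : ℕ, Tpow k (C →ₗ[k] V) n →ₗ[k] (C →ₗ[k] Tpow k V n)
  | 0 => (convConst : (k →ₗ[k] C →ₗ[k] k))
  | n + 1 => Tpow.lift ((conv Tpow.cons).compl₂ (convPow n))

lemma convPow_nil : convPow 0 (Tpow.nil : Tpow k (C →ₗ[k] V) 0) = convConst Tpow.nil := rfl

lemma convPow_cons {n : ℕ} (F : C →ₗ[k] V) (t : Tpow k (C →ₗ[k] V) n) :
    convPow (n + 1) (Tpow.cons F t) = conv Tpow.cons F (convPow n t) := by
  simp [convPow]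

lemma map_comp_convPow (q : V →ₗ[k] W) {n : ℕ} (t : Tpow k (C →ₗ[k] V) n) :
    Tpow.map q n ∘ₗ convPow n t = convPow n (Tpow.map (LinearMap.llcomp k C V W q) n t) := by
  suffices h : LinearMap.llcomp k C _ _ (Tpow.map q n) ∘ₗ convPow n =
      convPow n ∘ₗ Tpow.map (LinearMap.llcomp k C V W q) n from LinearMap.congr_fun h t
  clear t
  induction n with
  | zero =>
    refine Tpow.hom_ext_zero ?_
    simp only [LinearMap.comp_apply, LinearMap.llcomp_apply', Tpow.map_nil, convPow_nil,
      comp_convConst]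
  | succ n ih =>
    refine Tpow.hom_ext_succ fun F t => ?_
    have ht : Tpow.map q n ∘ₗ convPow n t = convPow n (Tpow.map (LinearMap.llcomp k C V W q) n t) :=
      LinearMap.congr_fun ih t
    simp only [LinearMap.comp_apply, LinearMap.llcomp_apply', convPow_cons, Tpow.map_cons,
      comp_conv, ← ht]
    exact conv_congr fun _ _ => by simp

lemma convPow_comp_coalgHom (g : C →ₗc[k] D) {n : ℕ} (t : Tpow k (D →ₗ[k] V) n) :
    convPow n t ∘ₗ g.toLinearMap =
      convPow n (Tpow.map (LinearMap.lcomp k V g.toLinearMap) n t) := by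
  suffices h : LinearMap.lcomp k _ g.toLinearMap ∘ₗ convPow n =
      convPow n ∘ₗ Tpow.map (LinearMap.lcomp k V g.toLinearMap) n from LinearMap.congr_fun h t
  clear t
  induction n with
  | zero => exact Tpow.hom_ext_zero (by ext; simp [convPow_nil, convConst_apply])
  | succ n ih =>
    refine Tpow.hom_ext_succ fun F t => ?_
    have ht := LinearMap.congr_fun ih t
    simp only [LinearMap.comp_apply, LinearMap.lcomp_apply'] at ht
    simp only [LinearMap.comp_apply, LinearMap.lcomp_apply', convPow_cons, Tpow.map_cons,
      conv_comp_coalgHom, ht]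

lemma convPow_groupLike {g : C} (hg : IsGroupLikeElem k g) {n : ℕ} (t : Tpow k (C →ₗ[k] V) n) :
    convPow n t g = Tpow.map (LinearMap.applyₗ g) n t := by
  suffices h : LinearMap.applyₗ g ∘ₗ convPow n = Tpow.map (LinearMap.applyₗ g) n from
    LinearMap.congr_fun h t
  clear t
  induction n with
  | zero => exact Tpow.hom_ext_zero (by simp [convPow_nil, convConst_apply, hg.counit_eq_one])
  | succ n ih =>
    refine Tpow.hom_ext_succ fun F t => ?_
    simp [convPow_cons, conv_groupLike _ _ _ hg, ← ih]

/-- The extension of a cochain on `X` with values in `N` to a cochain on the convolution algebra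
`Hom_k(C, X)` with values in `Hom_k(C, N)`. -/
def convCochain {n : ℕ} :
    (Tpow k X n →ₗ[k] N) →ₗ[k] (Tpow k (C →ₗ[k] X) n →ₗ[k] C →ₗ[k] N) :=
  LinearMap.lcomp k _ (convPow n) ∘ₗ LinearMap.llcomp k C (Tpow k X n) N

lemma convCochain_apply {n : ℕ} (φ : Tpow k X n →ₗ[k] N) (t : Tpow k (C →ₗ[k] X) n) :
    convCochain φ t = φ ∘ₗ convPow n t := rfl

lemma convCochain_comp_map {n : ℕ} (φ : Tpow k W n →ₗ[k] N) (q : V →ₗ[k] W) :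
    convCochain (C := C) (φ ∘ₗ Tpow.map q n) =
      convCochain φ ∘ₗ Tpow.map (LinearMap.llcomp k C V W q) n := by
  ext1 t
  simp only [convCochain_apply, LinearMap.comp_assoc, map_comp_convPow, LinearMap.comp_apply]

lemma convCochain_cons {n : ℕ} (φ : Tpow k X (n + 1) →ₗ[k] N) (F : C →ₗ[k] X)
    (t : Tpow k (C →ₗ[k] X) n) :
    convCochain φ (Tpow.cons F t) = conv LinearMap.applyₗ F (convCochain (curryHead φ) t) := by
  rw [convCochain_apply, convPow_cons, comp_conv]
  exact conv_congr fun _ _ => rfl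

lemma coboundary_convCochain (m : X →ₗ[k] X →ₗ[k] X) {n : ℕ} (l r : X →ₗ[k] N →ₗ[k] N)
    (φ : Tpow k X n →ₗ[k] N) :
    coboundary (conv m) n (conv l) (conv r.flip).flip (convCochain (C := C) φ) =
      convCochain (coboundary m n l r φ) := by
  induction n generalizing N with
  | zero =>
    refine Tpow.hom_ext_succ fun F t => ?_
    obtain ⟨a, rfl⟩ : ∃ a : k, t = a • Tpow.nil := ⟨t, (mul_one (show k from t)).symm⟩
    ext c
    simp [coboundary_zero_cons, convCochain_apply, convPow_cons, convPow_nil, comp_convConst,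
      conv_convConst_left, conv_convConst_right]
  | succ n ih =>
    let T : (C →ₗ[k] X →ₗ[k] N) →ₗ[k] ((C →ₗ[k] X) →ₗ[k] C →ₗ[k] N) := (conv LinearMap.applyₗ).flip
    have curry : curryHead (convCochain φ) = T ∘ₗ convCochain (C := C) (curryHead φ) := by
      ext1 t
      ext1 F
      exact convCochain_cons φ F t
    have left F G : T (conv (shiftLeft m) F G) = shiftLeft (conv m) F (T G) :=
      LinearMap.ext fun K => (conv_assoc (B₁ := .applyₗ) (B₂ := m) (B₃ := .applyₗ)
        (B₄ := shiftLeft m) (fun _ _ _ => rfl) K F G).symm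
    have right F G : T (conv (shiftRight r).flip G F) = shiftRight (conv r.flip).flip F (T G) :=
      LinearMap.ext fun K => (conv_assoc (B₁ := r.flip) (B₂ := .applyₗ) (B₃ := .applyₗ)
        (B₄ := (shiftRight r).flip) (fun _ _ _ => rfl) K G F).symm
    have natural := coboundary_comp (m := conv m) (l := conv (shiftLeft m))
      (l' := shiftLeft (conv m)) (r := (conv (shiftRight r).flip).flip)
      (r' := shiftRight (conv r.flip).flip) left right (convCochain (C := C) (curryHead φ))
    refine Tpow.hom_ext_succ fun F t => ?_
    rw [coboundary_succ_cons, curry, natural, ih, convCochain_cons]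
    ext c
    have 𝓡 := Coalgebra.Repr.arbitrary k c
    simp [T, conv_repr _ _ _ 𝓡, convCochain_apply, coboundary_succ_cons]

end ConvolutionCochains

section ConvolutionAlgebra

variable {k C D R R' : Type*} [CommSemiring k] [AddCommMonoid C] [Module k C] [Coalgebra k C]
  [AddCommMonoid D] [Module k D] [Coalgebra k D]
  [Semiring R] [Algebra k R] [Semiring R'] [Algebra k R']

lemma algHom_comp_conv (g : R →ₐ[k] R') (F G : C →ₗ[k] R) :
    g.toLinearMap ∘ₗ conv (LinearMap.mul k R) F G =
      conv (LinearMap.mul k R') (g.toLinearMap ∘ₗ F) (g.toLinearMap ∘ₗ G) := by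
  rw [comp_conv]
  exact conv_congr fun x y => map_mul g (F x) (G y)

lemma conv_algHom_comp_eq_one (g : R →ₐ[k] R') {F G : C →ₗ[k] R}
    (h : conv (LinearMap.mul k R) F G = convConst 1) :
    conv (LinearMap.mul k R') (g.toLinearMap ∘ₗ F) (g.toLinearMap ∘ₗ G) = convConst 1 := by
  rw [← algHom_comp_conv, h, comp_convConst, AlgHom.toLinearMap_apply, map_one]

lemma conv_mul_assoc (F G K : C →ₗ[k] R) :
    conv (LinearMap.mul k R) (conv (LinearMap.mul k R) F G) K =
      conv (LinearMap.mul k R) F (conv (LinearMap.mul k R) G K) :=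
  conv_assoc mul_assoc F G K

lemma eq_of_conv_eq_one {F G K : C →ₗ[k] R} (hFG : conv (LinearMap.mul k R) F G = convConst 1)
    (hGK : conv (LinearMap.mul k R) G K = convConst 1) : F = K := by
  have assoc := conv_mul_assoc F G K
  rw [hFG, hGK, conv_convConst_left, conv_convConst_right] at assoc
  ext c
  simpa using congr($assoc c).symm

lemma conv_tmul {X Y Z : Type*} [AddCommMonoid X] [Module k X] [AddCommMonoid Y] [Module k Y]
    [AddCommMonoid Z] [Module k Z] (B : X →ₗ[k] Y →ₗ[k] Z) (F : C ⊗[k] D →ₗ[k] X)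
    (G : C ⊗[k] D →ₗ[k] Y) {c : C} {ι : Type*} (𝓡 : Coalgebra.Repr k c ι) (d : D) :
    conv B F G (c ⊗ₜ[k] d) = ∑ i ∈ 𝓡.index,
      conv B (F ∘ₗ TensorProduct.mk k C D (𝓡.left i))
        (G ∘ₗ TensorProduct.mk k C D (𝓡.right i)) d := by
  have 𝓢 := Coalgebra.Repr.arbitrary k d
  simpa [conv_apply, sweedler_apply, TensorProduct.comul_tmul, ← 𝓡.eq, ← 𝓢.eq,
    TensorProduct.sum_tmul, TensorProduct.tmul_sum] using Finset.sum_comm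

end ConvolutionAlgebra

section Shear

variable {k C R : Type*} [CommSemiring k] [AddCommMonoid C] [Module k C] [Coalgebra k C]
  [Semiring R] [Algebra k R]

/-- The operator `r ⊗ c ↦ r F(c⁽¹⁾) ⊗ c⁽²⁾`, through which right convolution by `F` can be inverted
without a formula for the inverse of `F`. -/
def shear (F : C →ₗ[k] R) : R ⊗[k] C →ₗ[R] R ⊗[k] C :=
  TensorProduct.AlgebraTensorModule.lift
    (LinearMap.toSpanSingleton R (C →ₗ[k] R ⊗[k] C) (conv (TensorProduct.mk k R C) F .id))

lemma shear_tmul (F : C →ₗ[k] R) (r : R) (c : C) :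
    shear F (r ⊗ₜ[k] c) = r • conv (TensorProduct.mk k R C) F .id c := rfl

lemma shear_tmul_eq_conv (F : C →ₗ[k] R) (r : R) (c : C) :
    shear F (r ⊗ₜ[k] c) = conv (TensorProduct.mk k R C) (LinearMap.mulLeft k r ∘ₗ F) .id c := by
  have smul_comp : Algebra.lsmul k k (R ⊗[k] C) r ∘ₗ conv (TensorProduct.mk k R C) F .id =
      conv (TensorProduct.mk k R C) (LinearMap.mulLeft k r ∘ₗ F) .id := by
    rw [comp_conv]
    exact conv_congr fun _ _ => rfl
  exact congr($smul_comp c)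

lemma shear_shear (F G : C →ₗ[k] R) (t : R ⊗[k] C) :
    shear F (shear G t) = shear (conv (LinearMap.mul k R) G F) t := by
  induction t with
  | zero => simp
  | add s t hs ht => simp only [map_add, hs, ht]
  | tmul r c =>
    let smul : R →ₗ[k] R ⊗[k] C →ₗ[k] R ⊗[k] C := (Algebra.lsmul k k (R ⊗[k] C)).toLinearMap
    have shear_comp : (shear F).restrictScalars k ∘ₗ conv (TensorProduct.mk k R C) G .id =
        conv (TensorProduct.mk k R C) (conv (LinearMap.mul k R) G F) .id := by
      rw [comp_conv, conv_assoc (B₃ := smul) (B₄ := TensorProduct.mk k R C) (fun _ _ _ => rfl)]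
      exact conv_congr fun _ _ => rfl
    rw [shear_tmul, shear_tmul, map_smul, ← shear_comp]
    rfl

lemma shear_convConst_one (t : R ⊗[k] C) : shear (convConst 1 : C →ₗ[k] R) t = t := by
  induction t with
  | zero => simp
  | add s t hs ht => rw [map_add, hs, ht]
  | tmul r c => simp [shear_tmul, conv_convConst_left, TensorProduct.smul_tmul']

lemma shear_injective {F G : C →ₗ[k] R} (h : conv (LinearMap.mul k R) F G = convConst 1) :
    Function.Injective (shear F) :=
  Function.LeftInverse.injective (g := shear G) fun t => by
    rw [shear_shear, h, shear_convConst_one]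

lemma conv_eq_one_comm_of_shear_injective {F G : C →ₗ[k] R}
    (h : conv (LinearMap.mul k R) G F = convConst 1) (hF : Function.Injective (shear F)) :
    conv (LinearMap.mul k R) F G = convConst 1 := by
  let forget : R ⊗[k] C →ₗ[k] R :=
    (TensorProduct.rid k R).toLinearMap ∘ₗ Coalgebra.counit.lTensor R
  have forget_conv (K : C →ₗ[k] R) : forget ∘ₗ conv (TensorProduct.mk k R C) K .id = K := by
    rw [comp_conv]
    refine (conv_congr (B' := (LinearMap.lsmul k R).flip) (F' := K) (G' := Coalgebra.counit)
      fun x y => by simp [forget]).trans ?_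
    exact sweedler_of_counit_right K fun x y => rfl
  have shear_eq (t : R ⊗[k] C) : shear (conv (LinearMap.mul k R) F G) t = shear (convConst 1) t :=
    hF (by rw [← shear_shear, shear_shear, h, shear_convConst_one, shear_convConst_one])
  ext c
  have hc := congr(forget $(shear_eq (1 ⊗ₜ c)))
  rw [shear_tmul, shear_tmul, one_smul, one_smul] at hc
  exact (congr($(forget_conv _) c)).symm.trans (hc.trans congr($(forget_conv _) c))

end Shear

section Antipode

variable {k H : Type*} [CommSemiring k] [Semiring H] [HopfAlgebra k H]

lemma conv_antipode_id :
    conv (LinearMap.mul k H) (HopfAlgebra.antipode k) .id = convConst 1 := by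
  ext h
  have 𝓡 := Coalgebra.Repr.arbitrary k h
  simp [conv_repr _ _ _ 𝓡, HopfAlgebra.sum_antipode_mul_eq_smul 𝓡, convConst_apply]

lemma conv_id_antipode :
    conv (LinearMap.mul k H) .id (HopfAlgebra.antipode k) = convConst 1 := by
  ext h
  have 𝓡 := Coalgebra.Repr.arbitrary k h
  simp [conv_repr _ _ _ 𝓡, HopfAlgebra.sum_mul_antipode_eq_smul 𝓡, convConst_apply]

lemma comul_eq_conv {C : Type*} [AddCommMonoid C] [Module k C] [Coalgebra k C] :
    Coalgebra.comul (R := k) = conv (TensorProduct.mk k C C) .id .id := by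
  ext h
  have 𝓡 := Coalgebra.Repr.arbitrary k h
  rw [conv_repr _ _ _ 𝓡, ← 𝓡.eq]
  rfl

lemma comul_comp_antipode :
    Coalgebra.comul ∘ₗ HopfAlgebra.antipode k =
      conv (TensorProduct.mk k H H).flip (HopfAlgebra.antipode k) (HopfAlgebra.antipode k) := by
  have left : conv (LinearMap.mul k (H ⊗[k] H))
      (conv (TensorProduct.mk k H H).flip (HopfAlgebra.antipode k) (HopfAlgebra.antipode k))
      Coalgebra.comul = convConst 1 := by
    rw [comul_eq_conv, conv_conv_conv (B₅ := (TensorProduct.mk k H H).flip)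
      (B₄ := (LinearMap.mul k (H ⊗[k] H)).compl₂ (TensorProduct.mk k H H 1))
      (B₆ := LinearMap.mul k H) (by simp), conv_antipode_id, conv_convConst_right,
      LinearMap.flip_flip]
    calc _ = TensorProduct.mk k H H 1 ∘ₗ
          conv (LinearMap.mul k H) (HopfAlgebra.antipode k) .id := by
            rw [comp_conv]; exact conv_congr (by simp)
      _ = convConst 1 := by rw [conv_antipode_id, comp_convConst]; rfl
  have right := conv_algHom_comp_eq_one (Bialgebra.comulAlgHom k H) conv_id_antipode
  exact (eq_of_conv_eq_one left right).symm

end Antipode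

section SweedlerRepresentations

variable {k A H E : Type} [CommRing k] [Ring A] [Algebra k A] [Ring H] [HopfAlgebra k H]
  [Ring E] [Algebra k E]

lemma sRep_one (n : ℕ) : SRep k n (1 : H) 1 fun _ _ => 1 := by
  simpa [SRep] using itComul_groupLike IsGroupLikeElem.one n

lemma SRep.conv_tmul {X Y Z : Type} [AddCommGroup X] [Module k X] [AddCommGroup Y] [Module k Y]
    [AddCommGroup Z] [Module k Z] (B : X →ₗ[k] Y →ₗ[k] Z) (F : H ⊗[k] H →ₗ[k] X)
    (G : H ⊗[k] H →ₗ[k] Y) {h l : H} {m n : ℕ} {u : Fin m → Fin 2 → H} {v : Fin n → Fin 2 → H}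
    (hu : SRep k 1 h m u) (hv : SRep k 1 l n v) :
    conv B F G (h ⊗ₜ[k] l) =
      ∑ i, ∑ j, B (F (u i 0 ⊗ₜ v j 0)) (G (u i 1 ⊗ₜ v j 1)) := by
  rw [HopfCrossed.conv_tmul _ _ _ hu.repr]
  simp only [conv_repr _ _ _ hv.repr]
  rfl

lemma WeakAction.act_flip_mul (W : WeakAction k A H) (a b : A) :
    W.act.flip (a * b) = conv (LinearMap.mul k A) (W.act.flip a) (W.act.flip b) := by
  ext h
  obtain ⟨m, u, hu⟩ := exists_sRep (k := k) 1 h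
  rw [conv_repr _ _ _ hu.repr]
  exact W.act_mul h a b m u hu

lemma WeakAction.act_flip_one (W : WeakAction k A H) : W.act.flip 1 = convConst 1 :=
  LinearMap.ext W.act_one

lemma IsNormal.flip_one {f : H →ₗ[k] H →ₗ[k] A} (hf : IsNormal f) : f.flip 1 = convConst 1 :=
  LinearMap.ext fun h => (hf h).1

lemma IsNormal.one {f : H →ₗ[k] H →ₗ[k] A} (hf : IsNormal f) : f 1 = convConst 1 :=
  LinearMap.ext fun h => (hf h).2

lemma IsTwistedModule.conv_lift {W : WeakAction k A H} {f : H →ₗ[k] H →ₗ[k] A}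
    (hf : IsTwistedModule W f) (a : A) :
    conv (LinearMap.mul k A) (TensorProduct.lift (W.act.compl₂ (W.act.flip a)))
        (TensorProduct.lift f) =
      conv (LinearMap.mul k A) (TensorProduct.lift f) (W.act.flip a ∘ₗ LinearMap.mul' k H) := by
  ext h l
  obtain ⟨m, u, hu⟩ := exists_sRep (k := k) 1 h
  obtain ⟨n, v, hv⟩ := exists_sRep (k := k) 1 l
  refine (SRep.conv_tmul _ _ _ hu hv).trans ((hf h l a m n u v hu hv).trans ?_)
  exact (SRep.conv_tmul (LinearMap.mul k A) (TensorProduct.lift f)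
    (W.act.flip a ∘ₗ LinearMap.mul' k H) hu hv).symm

lemma IsConvInverse.symm {f g : H →ₗ[k] H →ₗ[k] A} (h : IsConvInverse f g) :
    IsConvInverse g f :=
  fun x y m n u v hu hv => (h x y m n u v hu hv).symm

lemma IsConvInverse.conv_lift {f g : H →ₗ[k] H →ₗ[k] A} (h : IsConvInverse f g) :
    conv (LinearMap.mul k A) (TensorProduct.lift f) (TensorProduct.lift g) = convConst 1 := by
  ext x y
  obtain ⟨m, u, hu⟩ := exists_sRep (k := k) 1 x
  obtain ⟨n, v, hv⟩ := exists_sRep (k := k) 1 y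
  refine (SRep.conv_tmul _ _ _ hu hv).trans ?_
  simpa [convConst_apply, mul_comm] using (h x y m n u v hu hv).1

end SweedlerRepresentations

namespace CrossedProduct

variable {k A H E : Type} [CommRing k] [Ring A] [Algebra k A] [Ring H] [HopfAlgebra k H]
  [Ring E] [Algebra k E] (S : CrossedProduct k A H E)

lemma ι_mul_ι (a b : A) (h l : H) {m : ℕ} {v : Fin m → Fin 2 → H} (hv : SRep k 1 l m v) :
    S.ι (a ⊗ₜ[k] h) * S.ι (b ⊗ₜ[k] l) =
      ∑ j, S.ι (a • conv (Algebra.lsmul k k (A ⊗[k] H)).toLinearMap (S.act.flip b)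
        (conv (TensorProduct.mk k A H) (S.f.flip (v j 0))
          ((LinearMap.mul k H).flip (v j 1))) h) := by
  obtain ⟨n, u, hu⟩ := exists_sRep (k := k) 2 h
  rw [S.ι_mul a b h l n m u v hu hv, Finset.sum_comm]
  refine Finset.sum_congr rfl fun j _ => ?_
  rw [hu.conv_conv]
  simp [TensorProduct.smul_tmul', mul_assoc, Finset.smul_sum]

lemma aE_mul_ι (a b : A) (h : H) : S.aE a * S.ι (b ⊗ₜ[k] h) = S.ι ((a * b) ⊗ₜ[k] h) := by
  obtain ⟨m, v, hv⟩ := exists_sRep (k := k) 1 h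
  have f_one : conv (TensorProduct.mk k A H) (S.f 1) .id h = 1 ⊗ₜ[k] h := by
    rw [S.f_normal.one, conv_convConst_left]
    rfl
  rw [conv_repr _ _ _ hv.repr] at f_one
  refine (S.ι_mul_ι a b 1 h hv).trans ?_
  rw [← map_sum]
  refine congrArg S.ι ?_
  calc _ = (a * b) • ∑ i, S.f 1 (v i 0) ⊗ₜ[k] v i 1 := by
        simp [conv_groupLike _ _ _ IsGroupLikeElem.one, S.one_act, Finset.smul_sum, mul_smul]
    _ = _ := by
        rw [show ∑ i, S.f 1 (v i 0) ⊗ₜ[k] v i 1 = _ from f_one, TensorProduct.smul_tmul',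
          smul_eq_mul, mul_one]

lemma ι_tmul (a : A) (h : H) : S.ι (a ⊗ₜ[k] h) = S.aE a * S.hE h := by
  rw [← mul_one a, ← S.aE_mul_ι, mul_one]
  rfl

/-- The inclusion `a ↦ a # 1` as a homomorphism of algebras. -/
def aEHom : A →ₐ[k] E :=
  AlgHom.ofLinearMap S.aE S.ι_one fun a b => (S.aE_mul_ι a b 1).symm

lemma hE_one : S.hE 1 = 1 := S.ι_one

lemma hE_mul_aE (b : A) :
    (LinearMap.mul k E).flip (S.aE b) ∘ₗ S.hE =
      conv (LinearMap.mul k E) (S.aE ∘ₗ S.act.flip b) S.hE := by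
  ext h
  refine (S.ι_mul_ι 1 b h 1 (sRep_one 1)).trans ?_
  rw [Finset.sum_const, Finset.card_univ, Fintype.card_fin, one_smul, one_smul,
    S.f_normal.flip_one, conv_convConst_left, ← LinearEquiv.coe_coe, ← LinearMap.comp_apply,
    comp_conv]
  refine congr($(conv_congr fun x y => ?_) h)
  simp [TensorProduct.smul_tmul', ι_tmul]

lemma ι_mul_hE (a : A) (h l : H) :
    S.ι (a ⊗ₜ[k] h) * S.hE l =
      S.ι (a • conv (TensorProduct.mk k A H) (TensorProduct.lift S.f) (LinearMap.mul' k H)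
        (h ⊗ₜ[k] l)) := by
  obtain ⟨m, v, hv⟩ := exists_sRep (k := k) 1 l
  obtain ⟨n, u, hu⟩ := exists_sRep (k := k) 1 h
  refine (S.ι_mul_ι a 1 h l hv).trans ?_
  rw [← map_sum, SRep.conv_tmul _ _ _ hu hv, S.act_flip_one, Finset.sum_comm, ← Finset.smul_sum]
  simp only [conv_convConst_left, LinearMap.comp_apply, conv_repr _ _ _ hu.repr, map_sum,
    AlgHom.toLinearMap_apply, map_one, Module.End.one_apply]
  rfl

/-- The map `h ⊗ l ↦ (1 # h)(1 # l)`. -/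
def hE₂ : H ⊗[k] H →ₗ[k] E := TensorProduct.lift ((LinearMap.mul k E).compl₁₂ S.hE S.hE)

lemma hE₂_eq_conv :
    S.hE₂ =
      conv (LinearMap.mul k E) (S.aE ∘ₗ TensorProduct.lift S.f) (S.hE ∘ₗ LinearMap.mul' k H) := by
  ext h l
  refine (S.ι_mul_hE 1 h l).trans ?_
  rw [one_smul, ← LinearEquiv.coe_coe, ← LinearMap.comp_apply, comp_conv]
  exact congr($(conv_congr fun x y => S.ι_tmul _ _) (h ⊗ₜ[k] l))

/-- The identification of `A ⊗ (H ⊗ H)` with `E ⊗ H`. -/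
def ιTensor : A ⊗[k] (H ⊗[k] H) ≃ₗ[k] E ⊗[k] H :=
  (TensorProduct.assoc k A H H).symm ≪≫ₗ S.ι.rTensor H

lemma mulLeft_ι_comp_hE (a : A) {h : H} {ι : Type*} (𝓡 : Coalgebra.Repr k h ι) :
    LinearMap.mulLeft k (S.ι (a ⊗ₜ h)) ∘ₗ S.hE = ∑ i ∈ 𝓡.index,
      conv ((TensorProduct.mk k A H ∘ₗ LinearMap.mulLeft k a).compr₂ S.ι.toLinearMap)
        (TensorProduct.lift S.f ∘ₗ TensorProduct.mk k H H (𝓡.left i))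
        (LinearMap.mul k H (𝓡.right i)) := by
  ext x
  have 𝓢 := Coalgebra.Repr.arbitrary k x
  refine (S.ι_mul_hE a h x).trans ?_
  simp [conv_tmul _ _ _ 𝓡, conv_repr _ _ _ 𝓢, Finset.smul_sum, TensorProduct.smul_tmul']

lemma shear_hE_ιTensor_tmul (a : A) (h l : H) :
    shear S.hE (S.ιTensor (a ⊗ₜ[k] (h ⊗ₜ[k] l))) =
      S.ιTensor (((shear .id).restrictScalars k).lTensor A
        (shear (TensorProduct.lift S.f) (a ⊗ₜ[k] (h ⊗ₜ[k] l)))) := by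
  have 𝓡 := Coalgebra.Repr.arbitrary k h
  let F i : H →ₗ[k] A := TensorProduct.lift S.f ∘ₗ TensorProduct.mk k H H (𝓡.left i)
  let G i : H →ₗ[k] H := LinearMap.mul k H (𝓡.right i)
  let sh : H ⊗[k] H →ₗ[k] H ⊗[k] H := (shear .id).restrictScalars k
  let B : A →ₗ[k] H →ₗ[k] E :=
    (TensorProduct.mk k A H ∘ₗ LinearMap.mulLeft k a).compr₂ S.ι.toLinearMap
  let B' : A →ₗ[k] H ⊗[k] H →ₗ[k] E ⊗[k] H :=
    (TensorProduct.mk k A (H ⊗[k] H) ∘ₗ LinearMap.mulLeft k a).compr₂ S.ιTensor.toLinearMap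
  have shear_mul i : conv (TensorProduct.mk k H H) (G i) .id =
      sh ∘ₗ TensorProduct.mk k H H (𝓡.right i) :=
    LinearMap.ext fun x => (shear_tmul_eq_conv .id (𝓡.right i) x).symm
  have lTensor_shear : S.ιTensor.toLinearMap ∘ₗ sh.lTensor A ∘ₗ
      conv (TensorProduct.mk k A (H ⊗[k] H)) (LinearMap.mulLeft k a ∘ₗ TensorProduct.lift S.f)
        .id = conv B' (TensorProduct.lift S.f) sh := by
    rw [comp_conv, comp_conv]
    exact conv_congr fun _ _ => rfl
  calc shear S.hE (S.ι (a ⊗ₜ h) ⊗ₜ l)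
      = conv (TensorProduct.mk k E H) (LinearMap.mulLeft k (S.ι (a ⊗ₜ h)) ∘ₗ S.hE) .id l :=
        shear_tmul_eq_conv _ _ _
    _ = ∑ i ∈ 𝓡.index, conv (TensorProduct.mk k E H) (conv B (F i) (G i)) .id l := by
        rw [S.mulLeft_ι_comp_hE a 𝓡, map_sum, LinearMap.sum_apply, LinearMap.sum_apply]
    _ = ∑ i ∈ 𝓡.index, conv B' (F i) (sh ∘ₗ TensorProduct.mk k H H (𝓡.right i)) l :=
        Finset.sum_congr rfl fun i _ => by
          rw [conv_assoc (B₄ := TensorProduct.mk k H H) (B₃ := B') (fun _ _ _ => rfl), shear_mul]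
    _ = conv B' (TensorProduct.lift S.f) sh (h ⊗ₜ l) := (conv_tmul _ _ _ 𝓡 l).symm
    _ = _ := by rw [← lTensor_shear, shear_tmul_eq_conv]; rfl

lemma shear_hE_ιTensor (t : A ⊗[k] (H ⊗[k] H)) :
    shear S.hE (S.ιTensor t) =
      S.ιTensor (((shear .id).restrictScalars k).lTensor A (shear (TensorProduct.lift S.f) t)) := by
  induction t with
  | zero => simp only [map_zero]
  | add s t hs ht => simp only [map_add, hs, ht]
  | tmul a t =>
    induction t with
    | zero => simp only [TensorProduct.tmul_zero, map_zero]
    | add s t hs ht => simp only [TensorProduct.tmul_add, map_add, hs, ht]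
    | tmul h l => exact S.shear_hE_ιTensor_tmul a h l

lemma shear_hE_injective {finv : H →ₗ[k] H →ₗ[k] A} (hf : IsConvInverse S.f finv) :
    Function.Injective (shear S.hE) := by
  let sh (F : H →ₗ[k] H) : H ⊗[k] H →ₗ[k] H ⊗[k] H := (shear F).restrictScalars k
  have cancel : sh (HopfAlgebra.antipode k) ∘ₗ sh .id = .id := LinearMap.ext fun t => by
    simp only [sh, LinearMap.comp_apply, LinearMap.coe_restrictScalars, shear_shear,
      conv_id_antipode, shear_convConst_one, LinearMap.id_apply]
  have lTensor_injective : Function.Injective ((sh .id).lTensor A) :=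
    Function.LeftInverse.injective (g := (sh (HopfAlgebra.antipode k)).lTensor A) fun t => by
      rw [← LinearMap.comp_apply, ← LinearMap.lTensor_comp, cancel, LinearMap.lTensor_id,
        LinearMap.id_apply]
  refine Function.Injective.of_comp_right (g := S.ιTensor) ?_ S.ιTensor.surjective
  rw [show shear S.hE ∘ S.ιTensor = _ from funext S.shear_hE_ιTensor]
  exact S.ιTensor.injective.comp (lTensor_injective.comp (shear_injective hf.conv_lift))

/-- The convolution inverse `h ↦ (1 # h)⁻¹ = f⁻¹(S(h⁽²⁾), h⁽³⁾) # S(h⁽¹⁾)` of `h ↦ 1 # h`. -/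
def hEInv (finv : H →ₗ[k] H →ₗ[k] A) : H →ₗ[k] E :=
  S.ι.toLinearMap ∘ₗ conv (TensorProduct.mk k A H).flip (HopfAlgebra.antipode k)
    (conv finv (HopfAlgebra.antipode k) .id)

lemma conv_finv_hE₂ {finv : H →ₗ[k] H →ₗ[k] A} (hf : IsConvInverse S.f finv) :
    conv (LinearMap.mul k E) (S.aE ∘ₗ TensorProduct.lift finv) S.hE₂ =
      S.hE ∘ₗ LinearMap.mul' k H := by
  rw [hE₂_eq_conv, ← conv_mul_assoc]
  refine congr(conv (LinearMap.mul k E)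
    $(conv_algHom_comp_eq_one S.aEHom hf.symm.conv_lift) _).trans ?_
  rw [conv_convConst_left]
  exact LinearMap.ext fun t => one_mul _

lemma conv_hEInv_hE {finv : H →ₗ[k] H →ₗ[k] A} (hf : IsConvInverse S.f finv) :
    conv (LinearMap.mul k E) (S.hEInv finv) S.hE = convConst 1 := by
  let B : H ⊗[k] H →ₗ[k] H ⊗[k] H →ₗ[k] E :=
    (TensorProduct.mk k _ _).compr₂ (TensorProduct.lift ((LinearMap.mul k E).compl₁₂
      (S.aE ∘ₗ TensorProduct.lift finv) S.hE₂) ∘ₗ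
        (TensorProduct.tensorTensorTensorComm k H H H H).toLinearMap)
  let B' : H →ₗ[k] A →ₗ[k] E := (LinearMap.mul k E).flip.compl₁₂ S.hE S.aE
  have hEInv_eq : S.hEInv finv =
      conv B' (HopfAlgebra.antipode k) (conv finv (HopfAlgebra.antipode k) .id) := by
    rw [hEInv, comp_conv]
    exact conv_congr fun x y => S.ι_tmul _ _
  have B_comul : B.compl₁₂ Coalgebra.comul Coalgebra.comul = (LinearMap.mul k H).compr₂ S.hE := by
    ext x y
    exact congr($(S.conv_finv_hE₂ hf) (x ⊗ₜ y))
  calc conv (LinearMap.mul k E) (S.hEInv finv) S.hE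
      = conv B
          (conv (TensorProduct.mk k H H).flip (HopfAlgebra.antipode k) (HopfAlgebra.antipode k))
          (conv (TensorProduct.mk k H H) .id .id) := by
        rw [hEInv_eq]
        refine ((conv_conv_conv (B₄ := (LinearMap.mul k E).compl₂ S.hE) (B₅ := B')
          (B₆ := finv) (fun v w x y => ?_) _ _ _ _).trans ?_).symm
        · exact (mul_assoc _ _ _).symm
        · exact conv_congr fun _ _ => rfl
    _ = conv ((LinearMap.mul k H).compr₂ S.hE) (HopfAlgebra.antipode k) .id := by
        rw [← comul_comp_antipode, ← comul_eq_conv, ← B_comul]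
        exact conv_congr fun _ _ => rfl
    _ = convConst 1 := by
        rw [← comp_conv, conv_antipode_id, comp_convConst, hE_one]

lemma conv_hE_hEInv {finv : H →ₗ[k] H →ₗ[k] A} (hf : IsConvInverse S.f finv) :
    conv (LinearMap.mul k E) S.hE (S.hEInv finv) = convConst 1 :=
  conv_eq_one_comm_of_shear_injective (S.conv_hEInv_hE hf) (S.shear_hE_injective hf)

lemma conv_hEInv_aE_act {finv : H →ₗ[k] H →ₗ[k] A} (hf : IsConvInverse S.f finv) (a : A) :
    conv (LinearMap.mul k E) (S.hEInv finv) (S.aE ∘ₗ S.act.flip a) =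
      LinearMap.mulLeft k (S.aE a) ∘ₗ S.hEInv finv := by
  have cancel (K : H →ₗ[k] E) :
      conv (LinearMap.mul k E) (conv (LinearMap.mul k E) K S.hE) (S.hEInv finv) = K := by
    rw [conv_mul_assoc, S.conv_hE_hEInv hf, conv_convConst_right]
    exact LinearMap.ext fun h => mul_one _
  calc conv (LinearMap.mul k E) (S.hEInv finv) (S.aE ∘ₗ S.act.flip a)
      = conv (LinearMap.mul k E) (conv (LinearMap.mul k E) (S.hEInv finv)
          ((LinearMap.mul k E).flip (S.aE a) ∘ₗ S.hE)) (S.hEInv finv) := by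
        rw [hE_mul_aE, ← conv_mul_assoc, cancel]
    _ = conv (LinearMap.mul k E) (conv (LinearMap.mul k E) (S.hEInv finv) S.hE)
          (LinearMap.mulLeft k (S.aE a) ∘ₗ S.hEInv finv) := by
        rw [conv_mul_assoc, conv_mul_assoc]
        exact congrArg _ (conv_congr fun _ _ => mul_assoc _ _ _)
    _ = LinearMap.mulLeft k (S.aE a) ∘ₗ S.hEInv finv := by
        rw [S.conv_hEInv_hE hf, conv_convConst_left]
        exact LinearMap.ext fun h => one_mul _

end CrossedProduct

section Sandwich

variable {k C R E M V W X : Type} [CommRing k] [AddCommGroup C] [Module k C] [Coalgebra k C]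
  [Ring R] [Algebra k R] [Ring E] [Algebra k E] [AddCommGroup M] [Module k M]
  [AddCommGroup V] [Module k V] [AddCommGroup W] [Module k W] [AddCommGroup X] [Module k X]

namespace Bimod

variable (Bi : Bimod k E M)

/-- The map `Z ↦ (c ↦ ∑ μ(c⁽¹⁾) Z(c⁽²⁾) γ(c⁽³⁾))` on functions from a coalgebra to a bimodule. -/
def sandwich (μ γ : C →ₗ[k] E) : (C →ₗ[k] M) →ₗ[k] (C →ₗ[k] M) :=
  conv Bi.l μ ∘ₗ (conv Bi.r.flip).flip γ

variable (μ γ : C →ₗ[k] E)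

lemma sandwich_apply (Z : C →ₗ[k] M) :
    Bi.sandwich μ γ Z = conv Bi.l μ (conv Bi.r.flip Z γ) := rfl

lemma sandwich_conv_left (j : X →ₗ[k] E) (F : C →ₗ[k] X) (Z : C →ₗ[k] M) :
    Bi.sandwich μ γ (conv (Bi.l ∘ₗ j) F Z) =
      Bi.sandwich (conv (LinearMap.mul k E) μ (j ∘ₗ F)) γ Z := by
  have inner : conv Bi.r.flip (conv (Bi.l ∘ₗ j) F Z) γ =
      conv Bi.l (j ∘ₗ F) (conv Bi.r.flip Z γ) := by
    rw [conv_assoc (B₃ := Bi.l ∘ₗ j) (B₄ := Bi.r.flip) fun x z e =>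
      (LinearMap.congr_fun (Bi.lr_comm (j x) e) z).symm]
    exact conv_congr fun _ _ => rfl
  rw [sandwich_apply, sandwich_apply, inner]
  exact (conv_assoc (fun x y z => LinearMap.congr_fun (Bi.l_mul x y) z) _ _ _).symm

lemma sandwich_conv_right (j : X →ₗ[k] E) (F : C →ₗ[k] X) (Z : C →ₗ[k] M) :
    Bi.sandwich μ γ (conv (Bi.r ∘ₗ j).flip Z F) =
      Bi.sandwich μ (conv (LinearMap.mul k E) (j ∘ₗ F) γ) Z := by
  have pull : conv (Bi.r ∘ₗ j).flip Z F = conv Bi.r.flip Z (j ∘ₗ F) := conv_congr fun _ _ => rfl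
  rw [sandwich_apply, sandwich_apply, pull]
  exact congrArg _ (conv_assoc (fun z x y => (LinearMap.congr_fun (Bi.r_mul x y) z).symm) _ _ _)

lemma conv_l_mulLeft (e : E) (Z : C →ₗ[k] M) :
    conv Bi.l (LinearMap.mulLeft k e ∘ₗ μ) Z = Bi.l e ∘ₗ conv Bi.l μ Z := by
  rw [comp_conv]
  exact conv_congr fun x z => LinearMap.congr_fun (Bi.l_mul e (μ x)) _

lemma conv_r_mulRight (e : E) (Z : C →ₗ[k] M) :
    conv Bi.r.flip Z ((LinearMap.mul k E).flip e ∘ₗ γ) = Bi.r e ∘ₗ conv Bi.r.flip Z γ := by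
  rw [comp_conv]
  exact conv_congr fun z x => LinearMap.congr_fun (Bi.r_mul (γ x) e) _

lemma conv_l_comp_r (e : E) (Z : C →ₗ[k] M) :
    conv Bi.l μ (Bi.r e ∘ₗ Z) = Bi.r e ∘ₗ conv Bi.l μ Z := by
  rw [comp_conv]
  exact conv_congr fun x z => LinearMap.congr_fun (Bi.lr_comm (μ x) e) _

lemma sandwich_mulLeft (e : E) (Z : C →ₗ[k] M) :
    Bi.sandwich (LinearMap.mulLeft k e ∘ₗ μ) γ Z = Bi.l e ∘ₗ Bi.sandwich μ γ Z :=
  Bi.conv_l_mulLeft μ e _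

lemma sandwich_mulRight (e : E) (Z : C →ₗ[k] M) :
    Bi.sandwich μ ((LinearMap.mul k E).flip e ∘ₗ γ) Z = Bi.r e ∘ₗ Bi.sandwich μ γ Z := by
  rw [sandwich_apply, sandwich_apply, conv_r_mulRight, conv_l_comp_r]

/-- The twist of an `n`-cochain `φ` by `δ : V → Hom_k(C, W)` and `μ, γ : C → E` at `c ∈ C`:
`v₁ ⊗ ⋯ ⊗ vₙ ↦ ∑ μ(c⁽¹⁾) φ(δ(v₁)(c⁽²⁾) ⊗ ⋯ ⊗ δ(vₙ)(c⁽ⁿ⁺¹⁾)) γ(c⁽ⁿ⁺²⁾)`. -/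
def twist (δ : V →ₗ[k] C →ₗ[k] W) (c : C) {n : ℕ} :
    (Tpow k W n →ₗ[k] M) →ₗ[k] (Tpow k V n →ₗ[k] M) :=
  LinearMap.llcomp k _ _ _ (LinearMap.applyₗ c ∘ₗ Bi.sandwich μ γ) ∘ₗ
    LinearMap.lcomp k _ (Tpow.map δ n) ∘ₗ convCochain

lemma twist_eq_comp (δ : V →ₗ[k] C →ₗ[k] W) (c : C) {n : ℕ} (φ : Tpow k W n →ₗ[k] M) :
    Bi.twist μ γ δ c φ =
      (LinearMap.applyₗ c ∘ₗ Bi.sandwich μ γ) ∘ₗ convCochain φ ∘ₗ Tpow.map δ n := rfl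

lemma twist_apply (δ : V →ₗ[k] C →ₗ[k] W) (c : C) {n : ℕ} (φ : Tpow k W n →ₗ[k] M)
    (t : Tpow k V n) :
    Bi.twist μ γ δ c φ t = Bi.sandwich μ γ (φ ∘ₗ convPow n (Tpow.map δ n t)) c := rfl

lemma twist_add (δ : V →ₗ[k] C →ₗ[k] W) (c d : C) {n : ℕ} (φ : Tpow k W n →ₗ[k] M) :
    Bi.twist μ γ δ (c + d) φ = Bi.twist μ γ δ c φ + Bi.twist μ γ δ d φ :=
  LinearMap.ext fun t => by simp only [twist_apply, LinearMap.add_apply, map_add]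

lemma twist_comp_map {V' W' : Type} [AddCommGroup V'] [Module k V'] [AddCommGroup W'] [Module k W']
    {δ : V →ₗ[k] C →ₗ[k] W} {δ' : V' →ₗ[k] C →ₗ[k] W'} {p : V →ₗ[k] V'} {q : W →ₗ[k] W'}
    (h : ∀ v, δ' (p v) = q ∘ₗ δ v) (c : C) {n : ℕ} (φ : Tpow k W' n →ₗ[k] M) :
    Bi.twist μ γ δ' c φ ∘ₗ Tpow.map p n = Bi.twist μ γ δ c (φ ∘ₗ Tpow.map q n) := by
  have hδ : δ' ∘ₗ p = LinearMap.llcomp k C W W' q ∘ₗ δ := LinearMap.ext h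
  simp only [twist_eq_comp, convCochain_comp_map, LinearMap.comp_assoc, ← Tpow.map_comp, hδ]

lemma twist_comp_coalgHom {D : Type} [AddCommGroup D] [Module k D] [Coalgebra k D]
    (g : C →ₗc[k] D) (μ γ : D →ₗ[k] E) (δ : V →ₗ[k] D →ₗ[k] W) (c : C) {n : ℕ}
    (φ : Tpow k W n →ₗ[k] M) :
    Bi.twist (μ ∘ₗ g.toLinearMap) (γ ∘ₗ g.toLinearMap)
      (LinearMap.lcomp k W g.toLinearMap ∘ₗ δ) c φ = Bi.twist μ γ δ (g c) φ := by
  ext1 t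
  have comp_g (Z : D →ₗ[k] M) : Bi.sandwich μ γ Z ∘ₗ g.toLinearMap =
      Bi.sandwich (μ ∘ₗ g.toLinearMap) (γ ∘ₗ g.toLinearMap) (Z ∘ₗ g.toLinearMap) := by
    simp only [sandwich_apply, conv_comp_coalgHom]
  rw [twist_apply, twist_apply, Tpow.map_comp, LinearMap.comp_apply, ← convPow_comp_coalgHom,
    ← LinearMap.comp_assoc, ← comp_g]
  rfl

lemma twist_groupLike {δ : V →ₗ[k] C →ₗ[k] V} {g : C} (hg : IsGroupLikeElem k g)
    (hμ : μ g = 1) (hγ : γ g = 1) (hδ : ∀ v, δ v g = v) {n : ℕ} (φ : Tpow k V n →ₗ[k] M) :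
    Bi.twist μ γ δ g φ = φ := by
  have hδ' : LinearMap.applyₗ g ∘ₗ δ = .id := LinearMap.ext hδ
  ext1 t
  rw [twist_apply, sandwich_apply, conv_groupLike _ _ _ hg, conv_groupLike _ _ _ hg, hμ, hγ,
    LinearMap.flip_apply, Bi.l_one, Bi.r_one, LinearMap.comp_apply, convPow_groupLike hg,
    ← LinearMap.comp_apply (Tpow.map _ n), ← Tpow.map_comp, hδ', Tpow.map_id]
  rfl

lemma coboundary_twist {j : R →ₗ[k] E} {α : R →ₗ[k] C →ₗ[k] R}
    (hα : ∀ a b, α (a * b) = conv (LinearMap.mul k R) (α a) (α b))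
    (hμ : ∀ a, conv (LinearMap.mul k E) μ (j ∘ₗ α a) = LinearMap.mulLeft k (j a) ∘ₗ μ)
    (hγ : ∀ a, conv (LinearMap.mul k E) (j ∘ₗ α a) γ = (LinearMap.mul k E).flip (j a) ∘ₗ γ)
    (c : C) {n : ℕ} (φ : Tpow k R n →ₗ[k] M) :
    coboundary (LinearMap.mul k R) n (Bi.l ∘ₗ j) (Bi.r ∘ₗ j) (Bi.twist μ γ α c φ) =
      Bi.twist μ γ α c (coboundary (LinearMap.mul k R) n (Bi.l ∘ₗ j) (Bi.r ∘ₗ j) φ) := by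
  rw [twist_eq_comp, twist_eq_comp, ← coboundary_convCochain]
  refine coboundary_natural hα (fun a Z => ?_) (fun a Z => ?_) _
  · simp only [LinearMap.comp_apply, LinearMap.applyₗ_apply_apply, sandwich_conv_left, hμ,
      sandwich_mulLeft]
  · simp only [LinearMap.comp_apply, LinearMap.applyₗ_apply_apply, LinearMap.flip_apply,
      sandwich_conv_right, hγ, sandwich_mulRight]

end Bimod

end Sandwich

section Normalized

variable {k A H E M : Type} [CommRing k] [Ring A] [Algebra k A] [Ring H] [HopfAlgebra k H]
  [Ring E] [Algebra k E] [AddCommGroup M] [Module k M]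

lemma IsHochschildCoD.comp_map_qbar {l r : A →ₗ[k] M →ₗ[k] M}
    {bd : ∀ n : ℕ, CoHCh k A M n →ₗ[k] CoHCh k A M (n + 1)} (hbd : IsHochschildCoD k l r bd)
    (n : ℕ) (φ : CoHCh k A M n) :
    bd n φ ∘ₗ Tpow.map (qbar k A) (n + 1) =
      coboundary (LinearMap.mul k A) n l r (φ ∘ₗ Tpow.map (qbar k A) n) := by
  refine Tpow.hom_ext fun x => ?_
  simp only [LinearMap.comp_apply, coboundary_tp, Tpow.map_tp]
  exact hbd n φ x

/-- The map `Ā → Hom_k(H, Ā)` induced by a weak action on `A`. -/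
def WeakAction.actBar (W : WeakAction k A H) : Qbar k A →ₗ[k] H →ₗ[k] Qbar k A :=
  (unitSub k A).liftQ (LinearMap.llcomp k H A _ (qbar k A) ∘ₗ W.act.flip) <| by
    have qbar_one : qbar k A 1 = 0 :=
      (Submodule.Quotient.mk_eq_zero _).2 ⟨1, map_one (algebraMap k A)⟩
    rintro _ ⟨x, rfl⟩
    rw [Algebra.linearMap_apply, Algebra.algebraMap_eq_smul_one, LinearMap.mem_ker, map_smul,
      LinearMap.comp_apply, W.act_flip_one, LinearMap.llcomp_apply', comp_convConst, qbar_one,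
      map_zero, smul_zero]

lemma WeakAction.actBar_qbar (W : WeakAction k A H) (a : A) :
    W.actBar (qbar k A a) = qbar k A ∘ₗ W.act.flip a := rfl

lemma WeakAction.actBar_one (W : WeakAction k A H) (v : Qbar k A) : W.actBar v 1 = v := by
  obtain ⟨a, rfl⟩ := (unitSub k A).mkQ_surjective v
  exact congrArg (qbar k A) (W.one_act a)

lemma exists_conv_convPow_eq_comp_itComul {C V Y : Type} [AddCommGroup C] [Module k C]
    [Coalgebra k C] [AddCommGroup V] [Module k V] [AddCommGroup Y] [Module k Y] {n : ℕ}
    (F : Fin n → C →ₗ[k] V) (G : C →ₗ[k] Y) :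
    ∃ g : Tpow k C (n + 1) →ₗ[k] Tpow k V n ⊗[k] Y,
      conv (TensorProduct.mk k _ Y) (convPow n (tp k F)) G = g ∘ₗ itComul k n ∧
        ∀ u, g (tp k u) = tp k (fun j => F j (u j.castSucc)) ⊗ₜ[k] G (u (Fin.last n)) := by
  induction n with
  | zero =>
    let g : C ⊗[k] k →ₗ[k] k ⊗[k] Y :=
      TensorProduct.mk k k Y 1 ∘ₗ G ∘ₗ (TensorProduct.rid k C).toLinearMap
    refine ⟨g, ?_, fun u => congrArg (fun x => (1 : k) ⊗ₜ[k] G x) (one_smul k (u 0))⟩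
    rw [tp_zero, convPow_nil, conv_convConst_left]
    ext c
    exact congrArg (fun x => (1 : k) ⊗ₜ[k] G x) (one_smul k c).symm
  | succ n ih =>
    obtain ⟨g, hg, hgu⟩ := ih (Fin.tail F)
    let B : V →ₗ[k] Tpow k V n ⊗[k] Y →ₗ[k] Tpow k V (n + 1) ⊗[k] Y :=
      LinearMap.rTensorHom Y ∘ₗ Tpow.cons
    refine ⟨Tpow.lift (B.compl₁₂ (F 0) g), ?_, fun u => ?_⟩
    · rw [tp_succ, convPow_cons, ← conv_comp_itComul, ← hg]
      exact conv_assoc (fun _ _ _ => rfl) _ _ _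
    · exact congrArg (B (F 0 (u 0))) (hgu (Fin.tail u))

lemma SRep.sandwich_hEInv_hE (S : CrossedProduct k A H E) (Bi : Bimod k E M)
    (finv : H →ₗ[k] H →ₗ[k] A) {V : Type} [AddCommGroup V] [Module k V] {n : ℕ}
    (φ : Tpow k V n →ₗ[k] M) (F : Fin n → H →ₗ[k] V) {h : H} {m : ℕ} {u : Fin m → Fin (n + 4) → H}
    (hu : SRep k (n + 3) h m u) :
    Bi.sandwich (S.hEInv finv) S.hE (φ ∘ₗ convPow n (tp k F)) h =
      ∑ i, Bi.r (S.hE (u i (Fin.last (n + 3))))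
        (Bi.l (S.ι (finv (HopfAlgebra.antipode k (u i 1)) (u i 2) ⊗ₜ[k]
            HopfAlgebra.antipode k (u i 0)))
          (φ (tp k fun j => F j (u i j.castSucc.succ.succ.succ)))) := by
  obtain ⟨g, hg, hgu⟩ := exists_conv_convPow_eq_comp_itComul F S.hE
  let ev : Tpow k V n ⊗[k] E →ₗ[k] M := TensorProduct.lift (Bi.r.flip ∘ₗ φ)
  let B₁ : H →ₗ[k] A ⊗[k] M →ₗ[k] M := (TensorProduct.lift.equiv (.id k) A M M).toLinearMap ∘ₗ
    ((TensorProduct.mk k A H).compr₂ (Bi.l ∘ₗ S.ι.toLinearMap)).flip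
  let B₂ : H →ₗ[k] H ⊗[k] M →ₗ[k] A ⊗[k] M := LinearMap.rTensorHom M ∘ₗ finv
  have right : conv Bi.r.flip (φ ∘ₗ convPow n (tp k F)) S.hE = (ev ∘ₗ g) ∘ₗ itComul k n := by
    rw [LinearMap.comp_assoc, ← hg, comp_conv]
    exact conv_congr fun _ _ => rfl
  have left (Z : H →ₗ[k] M) : conv Bi.l (S.hEInv finv) Z =
      conv B₁ (HopfAlgebra.antipode k) (conv B₂ (HopfAlgebra.antipode k)
        (conv (TensorProduct.mk k H M) .id Z)) := by
    rw [← conv_assoc (B₁ := TensorProduct.mk k A M) (B₂ := finv) fun _ _ _ => rfl,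
      CrossedProduct.hEInv, comp_conv]
    exact conv_assoc (fun _ _ _ => rfl) _ _ _
  rw [Bi.sandwich_apply, right, left, conv_comp_itComul, conv_comp_itComul, conv_comp_itComul,
    LinearMap.comp_apply, show itComul k (n + 3) h = _ from hu, map_sum]
  refine Finset.sum_congr rfl fun i _ => ?_
  have eval := congrArg (fun t => B₁ (HopfAlgebra.antipode k (u i 0))
    (B₂ (HopfAlgebra.antipode k (u i 1)) (u i 2 ⊗ₜ[k] ev t))) (hgu fun j => u i j.succ.succ.succ)
  exact eval.trans (LinearMap.congr_fun (Bi.lr_comm _ _) _)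

lemma IsCoTheta.eq_twist {S : CrossedProduct k A H E} {Bi : Bimod k E M}
    {finv : H →ₗ[k] H →ₗ[k] A} {θ : H → ∀ r : ℕ, CoHCh k A M r →ₗ[k] CoHCh k A M r}
    (hθ : IsCoTheta S Bi finv θ) (h : H) (n : ℕ) :
    θ h n = Bi.twist (S.hEInv finv) S.hE S.actBar h := by
  ext1 φ
  refine Tpow.comp_map_cancel (unitSub k A).mkQ_surjective (Tpow.hom_ext fun a => ?_)
  obtain ⟨m, u, hu⟩ := exists_sRep (k := k) (n + 3) h
  simp only [LinearMap.comp_apply, Bimod.twist_apply, Tpow.map_tp]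
  rw [hu.sandwich_hEInv_hE]
  exact hθ h n φ a m u hu

end Normalized

section TensorAct

variable {k C D R E M V W X Y Z : Type} [CommRing k] [AddCommGroup C] [Module k C]
  [AddCommGroup D] [Module k D] [Ring R] [Algebra k R] [Ring E] [Algebra k E]
  [AddCommGroup M] [Module k M] [AddCommGroup V] [Module k V] [AddCommGroup W] [Module k W]
  [AddCommGroup X] [Module k X] [AddCommGroup Y] [Module k Y] [AddCommGroup Z] [Module k Z]

lemma curry_flip_injective {F G : C ⊗[k] D →ₗ[k] X}
    (h : (TensorProduct.curry F).flip = (TensorProduct.curry G).flip) : F = G :=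
  TensorProduct.ext' fun c d => LinearMap.congr_fun₂ h d c

/-- The successive application `v ↦ (c ⊗ d ↦ δ(δ'(v)(d))(c))` of two parametrized maps. -/
def tensorAct (δ : W →ₗ[k] C →ₗ[k] X) (δ' : V →ₗ[k] D →ₗ[k] W) : V →ₗ[k] C ⊗[k] D →ₗ[k] X :=
  (TensorProduct.lift.equiv (.id k) C D X).toLinearMap ∘ₗ LinearMap.lflip.toLinearMap ∘ₗ
    LinearMap.llcomp k D W _ δ ∘ₗ δ'

variable (δ : W →ₗ[k] C →ₗ[k] X) (δ' : V →ₗ[k] D →ₗ[k] W)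

lemma curry_tensorAct (v : V) : (TensorProduct.curry (tensorAct δ δ' v)).flip = δ ∘ₗ δ' v := rfl

lemma tensorAct_comp {V' W' X' : Type} [AddCommGroup V'] [Module k V'] [AddCommGroup W']
    [Module k W'] [AddCommGroup X'] [Module k X'] {δ : W →ₗ[k] C →ₗ[k] X} {δ' : V →ₗ[k] D →ₗ[k] W}
    {ε : W' →ₗ[k] C →ₗ[k] X'} {ε' : V' →ₗ[k] D →ₗ[k] W'} {o : V →ₗ[k] V'} {p : W →ₗ[k] W'}
    {q : X →ₗ[k] X'} (hδ : ∀ w, ε (p w) = q ∘ₗ δ w) (hδ' : ∀ v, ε' (o v) = p ∘ₗ δ' v) (v : V) :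
    tensorAct ε ε' (o v) = q ∘ₗ tensorAct δ δ' v :=
  curry_flip_injective <| by
    rw [curry_tensorAct, hδ']
    exact LinearMap.ext fun d => hδ (δ' v d)

variable [Coalgebra k C] [Coalgebra k D]

lemma curry_flip_conv (B : X →ₗ[k] Y →ₗ[k] Z) (F : C ⊗[k] D →ₗ[k] X) (G : C ⊗[k] D →ₗ[k] Y) :
    (TensorProduct.curry (conv B F G)).flip =
      conv (conv B) (TensorProduct.curry F).flip (TensorProduct.curry G).flip := by
  ext d c
  have 𝓡 := Coalgebra.Repr.arbitrary k c
  have 𝓢 := Coalgebra.Repr.arbitrary k d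
  simp only [LinearMap.flip_apply, TensorProduct.curry_apply, conv_tmul _ _ _ 𝓡, conv_repr _ _ _ 𝓢,
    LinearMap.sum_apply, conv_repr _ _ _ 𝓡]
  exact Finset.sum_comm

lemma curry_convPow_tensorAct {n : ℕ} (t : Tpow k V n) :
    (TensorProduct.curry (convPow n (Tpow.map (tensorAct δ δ') n t))).flip =
      convPow n ∘ₗ Tpow.map δ n ∘ₗ convPow n (Tpow.map δ' n t) := by
  suffices h : (LinearMap.lflip.toLinearMap ∘ₗ TensorProduct.lcurry (.id k) C D _) ∘ₗ convPow n ∘ₗ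
      Tpow.map (tensorAct δ δ') n = LinearMap.llcomp k D _ _ (convPow n ∘ₗ Tpow.map δ n) ∘ₗ
        convPow n ∘ₗ Tpow.map δ' n from LinearMap.congr_fun h t
  clear t
  induction n with
  | zero =>
    refine Tpow.hom_ext_zero ?_
    ext d c
    simp [convPow_nil, convConst_apply, mul_smul]
  | succ n ih =>
    refine Tpow.hom_ext_succ fun v t => ?_
    have ht : (TensorProduct.curry (convPow n (Tpow.map (tensorAct δ δ') n t))).flip =
      convPow n ∘ₗ Tpow.map δ n ∘ₗ convPow n (Tpow.map δ' n t) := LinearMap.congr_fun ih t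
    have curried : (TensorProduct.curry
        (convPow (n + 1) (Tpow.map (tensorAct δ δ') (n + 1) (Tpow.cons v t)))).flip =
      (convPow (n + 1) ∘ₗ Tpow.map δ (n + 1)) ∘ₗ
        convPow (n + 1) (Tpow.map δ' (n + 1) (Tpow.cons v t)) := by
      rw [Tpow.map_cons, Tpow.map_cons, convPow_cons, convPow_cons, comp_conv, curry_flip_conv, ht,
        curry_tensorAct]
      exact conv_congr fun x y => by simp [convPow_cons]
    exact curried

namespace Bimod

variable (Bi : Bimod k E M) (μ γ : C →ₗ[k] E) (μ' γ' : D →ₗ[k] E)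

lemma sandwich_tmul (Z : C ⊗[k] D →ₗ[k] M) (c : C) (d : D) :
    Bi.sandwich (TensorProduct.lift ((LinearMap.mul k E).flip.compl₁₂ μ μ'))
        (TensorProduct.lift ((LinearMap.mul k E).compl₁₂ γ γ')) Z (c ⊗ₜ[k] d) =
      Bi.sandwich μ' γ'
        (LinearMap.applyₗ c ∘ₗ Bi.sandwich μ γ ∘ₗ (TensorProduct.curry Z).flip) d := by
  let μ₂ : C ⊗[k] D →ₗ[k] E := TensorProduct.lift ((LinearMap.mul k E).flip.compl₁₂ μ μ')
  let γ₂ : C ⊗[k] D →ₗ[k] E := TensorProduct.lift ((LinearMap.mul k E).compl₁₂ γ γ')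
  let L : E →ₗ[k] (C →ₗ[k] M) →ₗ[k] (C →ₗ[k] M) := LinearMap.llcomp k C M M ∘ₗ Bi.l
  let R : E →ₗ[k] (C →ₗ[k] M) →ₗ[k] (C →ₗ[k] M) := LinearMap.llcomp k C M M ∘ₗ Bi.r
  have right : (TensorProduct.curry (conv Bi.r.flip Z γ₂)).flip =
      conv R.flip ((conv Bi.r.flip).flip γ ∘ₗ (TensorProduct.curry Z).flip) γ' := by
    rw [curry_flip_conv]
    exact conv_congr fun x y => Bi.conv_r_mulRight γ (γ' y) _
  have left (Y : C ⊗[k] D →ₗ[k] M) : (TensorProduct.curry (conv Bi.l μ₂ Y)).flip =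
      conv L μ' (conv Bi.l μ ∘ₗ (TensorProduct.curry Y).flip) := by
    rw [curry_flip_conv]
    exact conv_congr fun x y => Bi.conv_l_mulLeft μ (μ' x) _
  have swap (Y : D →ₗ[k] C →ₗ[k] M) :
      conv Bi.l μ ∘ₗ conv R.flip Y γ' = conv R.flip (conv Bi.l μ ∘ₗ Y) γ' := by
    rw [comp_conv]
    exact conv_congr fun x y => Bi.conv_l_comp_r μ (γ' y) _
  have eval (Y : D →ₗ[k] C →ₗ[k] M) : LinearMap.applyₗ c ∘ₗ conv L μ' (conv R.flip Y γ') =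
      Bi.sandwich μ' γ' (LinearMap.applyₗ c ∘ₗ Y) := by
    have inner : LinearMap.applyₗ c ∘ₗ conv R.flip Y γ' =
        conv Bi.r.flip (LinearMap.applyₗ c ∘ₗ Y) γ' := by
      rw [comp_conv]
      exact conv_congr fun _ _ => rfl
    rw [sandwich_apply, ← inner, comp_conv]
    exact conv_congr fun _ _ => rfl
  calc Bi.sandwich μ₂ γ₂ Z (c ⊗ₜ[k] d)
      = (TensorProduct.curry (conv Bi.l μ₂ (conv Bi.r.flip Z γ₂))).flip d c := rfl
    _ = _ := by rw [left, right, swap]; exact LinearMap.congr_fun (eval _) d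

lemma twist_twist (c : C) (d : D) {n : ℕ} (φ : Tpow k X n →ₗ[k] M) :
    Bi.twist μ' γ' δ' d (Bi.twist μ γ δ c φ) =
      Bi.twist (TensorProduct.lift ((LinearMap.mul k E).flip.compl₁₂ μ μ'))
        (TensorProduct.lift ((LinearMap.mul k E).compl₁₂ γ γ')) (tensorAct δ δ') (c ⊗ₜ[k] d) φ := by
  ext1 t
  have curry : (TensorProduct.curry (φ ∘ₗ convPow n (Tpow.map (tensorAct δ δ') n t))).flip =
      convCochain φ ∘ₗ Tpow.map δ n ∘ₗ convPow n (Tpow.map δ' n t) :=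
    congrArg (LinearMap.llcomp k D _ _ (LinearMap.llcomp k C _ _ φ))
      (curry_convPow_tensorAct δ δ' t)
  rw [twist_apply, twist_apply, sandwich_tmul, curry]
  rfl

end Bimod

lemma tensorAct_mul {δ : R →ₗ[k] C →ₗ[k] R} {δ' : R →ₗ[k] D →ₗ[k] R}
    (hδ : ∀ a b, δ (a * b) = conv (LinearMap.mul k R) (δ a) (δ b))
    (hδ' : ∀ a b, δ' (a * b) = conv (LinearMap.mul k R) (δ' a) (δ' b)) (a b : R) :
    tensorAct δ δ' (a * b) = conv (LinearMap.mul k R) (tensorAct δ δ' a) (tensorAct δ δ' b) := by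
  refine curry_flip_injective ?_
  rw [curry_flip_conv, curry_tensorAct, hδ', comp_conv]
  exact conv_congr fun x y => hδ (δ' a x) (δ' b y)

lemma conv_mulLeft (μ F : C →ₗ[k] E) (e : E) :
    conv (LinearMap.mul k E) (LinearMap.mulLeft k e ∘ₗ μ) F =
      LinearMap.mulLeft k e ∘ₗ conv (LinearMap.mul k E) μ F := by
  rw [comp_conv]
  exact conv_congr fun x y => mul_assoc e (μ x) (F y)

lemma conv_tensorAct {j : R →ₗ[k] E} {μ : C →ₗ[k] E} {μ' : D →ₗ[k] E}
    {δ : R →ₗ[k] C →ₗ[k] R} {δ' : R →ₗ[k] D →ₗ[k] R}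
    (hμ : ∀ a, conv (LinearMap.mul k E) μ (j ∘ₗ δ a) = LinearMap.mulLeft k (j a) ∘ₗ μ)
    (hμ' : ∀ a, conv (LinearMap.mul k E) μ' (j ∘ₗ δ' a) = LinearMap.mulLeft k (j a) ∘ₗ μ') (a : R) :
    conv (LinearMap.mul k E) (TensorProduct.lift ((LinearMap.mul k E).flip.compl₁₂ μ μ'))
        (j ∘ₗ tensorAct δ δ' a) =
      LinearMap.mulLeft k (j a) ∘ₗ
        TensorProduct.lift ((LinearMap.mul k E).flip.compl₁₂ μ μ') := by
  refine curry_flip_injective ?_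
  let B : E →ₗ[k] C →ₗ[k] E := (LinearMap.mul k E).compl₂ μ
  have reassoc :
      conv (conv (LinearMap.mul k E)) (B ∘ₗ μ') (LinearMap.llcomp k C _ _ j ∘ₗ δ ∘ₗ δ' a) =
      B ∘ₗ conv (LinearMap.mul k E) μ' (j ∘ₗ δ' a) := by
    rw [comp_conv]
    refine conv_congr fun x y => ?_
    refine (conv_mulLeft μ (j ∘ₗ δ (δ' a y)) (μ' x)).trans ?_
    rw [hμ, ← LinearMap.comp_assoc, ← LinearMap.mulLeft_mul]
    rfl
  rw [curry_flip_conv]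
  refine reassoc.trans ?_
  ext d c
  simp [hμ', B, mul_assoc]

lemma conv_lift_mul_eq_one {μ γ : C →ₗ[k] E} {μ' γ' : D →ₗ[k] E}
    (h : conv (LinearMap.mul k E) μ γ = convConst 1)
    (h' : conv (LinearMap.mul k E) μ' γ' = convConst 1) :
    conv (LinearMap.mul k E) (TensorProduct.lift ((LinearMap.mul k E).flip.compl₁₂ μ μ'))
      (TensorProduct.lift ((LinearMap.mul k E).compl₁₂ γ γ')) = convConst 1 := by
  refine curry_flip_injective ?_
  let B : E →ₗ[k] C →ₗ[k] E := (LinearMap.mul k E).compl₂ μ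
  let B' : E →ₗ[k] C →ₗ[k] E := ((LinearMap.mul k E).compl₁₂ γ .id).flip
  have collapse : conv (conv (LinearMap.mul k E)) (B ∘ₗ μ') (B' ∘ₗ γ') =
      convConst ∘ₗ conv (LinearMap.mul k E) μ' γ' := by
    rw [comp_conv]
    refine conv_congr fun x y => ?_
    refine (conv_mulLeft μ (B' (γ' y)) (μ' x)).trans ?_
    have cancel : conv (LinearMap.mul k E) μ (B' (γ' y)) =
        (LinearMap.mul k E).flip (γ' y) ∘ₗ convConst 1 := by
      rw [← h, comp_conv]
      exact conv_congr fun v w => (mul_assoc (μ v) (γ w) (γ' y)).symm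
    rw [cancel, comp_convConst, comp_convConst]
    simp
  rw [curry_flip_conv]
  refine collapse.trans ?_
  rw [h']
  ext d c
  simp [convConst_apply, mul_smul, smul_comm (Coalgebra.counit (R := k) d)]

end TensorAct

section TwistHomotopy

variable {k C R E M V W : Type} [CommRing k] [AddCommGroup C] [Module k C] [Coalgebra k C]
  [Ring R] [Algebra k R] [Ring E] [Algebra k E] [AddCommGroup M] [Module k M]
  [AddCommGroup V] [Module k V] [AddCommGroup W] [Module k W]

namespace Bimod

variable (Bi : Bimod k E M) (μ γ : C →ₗ[k] E)

/-- The homotopy between the twists by `α` and by `β` when `f : C → W` intertwines `α` and `β`: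
`v₁ ⊗ ⋯ ⊗ vₙ` goes to the alternating sum over `i` of the twisted values
`μ φ(α(v₁) ⊗ ⋯ ⊗ α(vᵢ) ⊗ f ⊗ β(vᵢ₊₁) ⊗ ⋯ ⊗ β(vₙ)) γ`, convolved and evaluated at `c`. -/
def twistHomotopy (f : C →ₗ[k] W) (α β : V →ₗ[k] C →ₗ[k] W) (c : C) {n : ℕ} :
    (Tpow k W (n + 1) →ₗ[k] M) →ₗ[k] (Tpow k V n →ₗ[k] M) :=
  LinearMap.llcomp k _ _ _ (LinearMap.applyₗ c ∘ₗ Bi.sandwich μ γ) ∘ₗ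
    LinearMap.lcomp k _ (insertion f α β n) ∘ₗ convCochain

lemma twistHomotopy_eq_comp (f : C →ₗ[k] W) (α β : V →ₗ[k] C →ₗ[k] W) (c : C) {n : ℕ}
    (φ : Tpow k W (n + 1) →ₗ[k] M) : Bi.twistHomotopy μ γ f α β c φ =
      (LinearMap.applyₗ c ∘ₗ Bi.sandwich μ γ) ∘ₗ convCochain φ ∘ₗ insertion f α β n := rfl

lemma twistHomotopy_comp_map {V' W' : Type} [AddCommGroup V'] [Module k V'] [AddCommGroup W']
    [Module k W'] {α β : V →ₗ[k] C →ₗ[k] W} {α' β' : V' →ₗ[k] C →ₗ[k] W'}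
    {p : V →ₗ[k] V'} {q : W →ₗ[k] W'} (hα : ∀ v, α' (p v) = q ∘ₗ α v)
    (hβ : ∀ v, β' (p v) = q ∘ₗ β v) (f : C →ₗ[k] W) (c : C) {n : ℕ}
    (φ : Tpow k W' (n + 1) →ₗ[k] M) :
    Bi.twistHomotopy μ γ (q ∘ₗ f) α' β' c φ ∘ₗ Tpow.map p n =
      Bi.twistHomotopy μ γ f α β c (φ ∘ₗ Tpow.map q (n + 1)) := by
  have insert := map_comp_insertion (q := LinearMap.llcomp k C W W' q) (f := f)
    (fun v => (hα v).symm) (fun v => (hβ v).symm) n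
  simp only [twistHomotopy_eq_comp, convCochain_comp_map, LinearMap.comp_assoc, insert,
    LinearMap.llcomp_apply']

variable {j : R →ₗ[k] E} {f : C →ₗ[k] R} {α β : R →ₗ[k] C →ₗ[k] R}

lemma twistHomotopy_coboundary_zero (c : C) (φ : Tpow k R 0 →ₗ[k] M) :
    Bi.twistHomotopy μ γ f α β c
        (coboundary (LinearMap.mul k R) 0 (Bi.l ∘ₗ j) (Bi.r ∘ₗ j) φ) =
      Bi.twist (conv (LinearMap.mul k E) μ (j ∘ₗ f)) γ β c φ -
        Bi.twist μ (conv (LinearMap.mul k E) (j ∘ₗ f) γ) α c φ := by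
  rw [twistHomotopy_eq_comp, ← coboundary_convCochain, coboundary_insertion_zero,
    LinearMap.comp_sub]
  congr 1 <;> refine LinearMap.ext fun t => ?_
  · exact LinearMap.congr_fun (Bi.sandwich_conv_left μ γ j f _) c
  · exact LinearMap.congr_fun (Bi.sandwich_conv_right μ γ j f _) c

lemma coboundary_twistHomotopy (hα : ∀ a b, α (a * b) = conv (LinearMap.mul k R) (α a) (α b))
    (hβ : ∀ a b, β (a * b) = conv (LinearMap.mul k R) (β a) (β b))
    (hf : ∀ a, conv (LinearMap.mul k R) (α a) f = conv (LinearMap.mul k R) f (β a))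
    (hμ : ∀ a, conv (LinearMap.mul k E) μ (j ∘ₗ α a) = LinearMap.mulLeft k (j a) ∘ₗ μ)
    (hγ : ∀ a, conv (LinearMap.mul k E) (j ∘ₗ β a) γ = (LinearMap.mul k E).flip (j a) ∘ₗ γ)
    (c : C) {n : ℕ} (φ : Tpow k R (n + 1) →ₗ[k] M) :
    coboundary (LinearMap.mul k R) n (Bi.l ∘ₗ j) (Bi.r ∘ₗ j) (Bi.twistHomotopy μ γ f α β c φ) +
        Bi.twistHomotopy μ γ f α β c
          (coboundary (LinearMap.mul k R) (n + 1) (Bi.l ∘ₗ j) (Bi.r ∘ₗ j) φ) =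
      Bi.twist (conv (LinearMap.mul k E) μ (j ∘ₗ f)) γ β c φ -
        Bi.twist μ (conv (LinearMap.mul k E) (j ∘ₗ f) γ) α c φ := by
  let T : (C →ₗ[k] M) →ₗ[k] M := LinearMap.applyₗ c ∘ₗ Bi.sandwich μ γ
  have natural : coboundary (LinearMap.mul k R) n (Bi.l ∘ₗ j) (Bi.r ∘ₗ j)
      (T ∘ₗ convCochain φ ∘ₗ insertion f α β n) =
      T ∘ₗ coboundary (LinearMap.mul k R) n (conv (Bi.l ∘ₗ j) ∘ₗ α)
        ((conv (Bi.r ∘ₗ j).flip).flip ∘ₗ β) (convCochain φ ∘ₗ insertion f α β n) := by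
    refine coboundary_comp (fun a Z => ?_) (fun a Z => ?_) _
    · simp only [T, LinearMap.comp_apply, LinearMap.applyₗ_apply_apply, sandwich_conv_left, hμ,
        sandwich_mulLeft]
    · simp only [T, LinearMap.comp_apply, LinearMap.applyₗ_apply_apply, LinearMap.flip_apply,
        sandwich_conv_right, hγ, sandwich_mulRight]
  rw [twistHomotopy_eq_comp, twistHomotopy_eq_comp, natural, ← coboundary_convCochain,
    ← LinearMap.comp_add, coboundary_insertion hα hβ hf, LinearMap.comp_sub]
  congr 1 <;> ext1 t
  · exact LinearMap.congr_fun (Bi.sandwich_conv_left μ γ j f _) c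
  · exact LinearMap.congr_fun (Bi.sandwich_conv_right μ γ j f _) c

end Bimod

end TwistHomotopy

section NormalizedTwist

variable {k A C E M : Type} [CommRing k] [AddCommGroup C] [Module k C] [Coalgebra k C]
  [Ring A] [Algebra k A] [Ring E] [Algebra k E] [AddCommGroup M] [Module k M]
  {Bi : Bimod k E M} {μ γ : C →ₗ[k] E} {j : A →ₗ[k] E} {f : C →ₗ[k] A} {α β : A →ₗ[k] C →ₗ[k] A}
  {α' β' : Qbar k A →ₗ[k] C →ₗ[k] Qbar k A}
  {bd : ∀ n : ℕ, CoHCh k A M n →ₗ[k] CoHCh k A M (n + 1)}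

lemma IsHochschildCoD.bd_twist (hbd : IsHochschildCoD k (Bi.l ∘ₗ j) (Bi.r ∘ₗ j) bd)
    (hα' : ∀ a, α' (qbar k A a) = qbar k A ∘ₗ α a)
    (hα : ∀ a b, α (a * b) = conv (LinearMap.mul k A) (α a) (α b))
    (hμ : ∀ a, conv (LinearMap.mul k E) μ (j ∘ₗ α a) = LinearMap.mulLeft k (j a) ∘ₗ μ)
    (hγ : ∀ a, conv (LinearMap.mul k E) (j ∘ₗ α a) γ = (LinearMap.mul k E).flip (j a) ∘ₗ γ)
    (c : C) (n : ℕ) (φ : CoHCh k A M n) :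
    bd n (Bi.twist μ γ α' c φ) = Bi.twist μ γ α' c (bd n φ) := by
  refine Tpow.comp_map_cancel (unitSub k A).mkQ_surjective ?_
  rw [hbd.comp_map_qbar, Bi.twist_comp_map μ γ hα', Bi.twist_comp_map μ γ hα', hbd.comp_map_qbar,
    Bi.coboundary_twist μ γ hα hμ hγ]

lemma IsHochschildCoD.twistHomotopy_bd_zero
    (hbd : IsHochschildCoD k (Bi.l ∘ₗ j) (Bi.r ∘ₗ j) bd)
    (hα' : ∀ a, α' (qbar k A a) = qbar k A ∘ₗ α a) (hβ' : ∀ a, β' (qbar k A a) = qbar k A ∘ₗ β a)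
    (c : C) (φ : CoHCh k A M 0) :
    Bi.twistHomotopy μ γ (qbar k A ∘ₗ f) α' β' c (bd 0 φ) =
      Bi.twist (conv (LinearMap.mul k E) μ (j ∘ₗ f)) γ β' c φ -
        Bi.twist μ (conv (LinearMap.mul k E) (j ∘ₗ f) γ) α' c φ := by
  refine Tpow.comp_map_cancel (unitSub k A).mkQ_surjective ?_
  rw [LinearMap.sub_comp, Bi.twistHomotopy_comp_map μ γ hα' hβ', hbd.comp_map_qbar,
    Bi.twist_comp_map _ _ hα', Bi.twist_comp_map _ _ hβ', Bi.twistHomotopy_coboundary_zero]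

lemma IsHochschildCoD.bd_twistHomotopy
    (hbd : IsHochschildCoD k (Bi.l ∘ₗ j) (Bi.r ∘ₗ j) bd)
    (hα' : ∀ a, α' (qbar k A a) = qbar k A ∘ₗ α a) (hβ' : ∀ a, β' (qbar k A a) = qbar k A ∘ₗ β a)
    (hα : ∀ a b, α (a * b) = conv (LinearMap.mul k A) (α a) (α b))
    (hβ : ∀ a b, β (a * b) = conv (LinearMap.mul k A) (β a) (β b))
    (hf : ∀ a, conv (LinearMap.mul k A) (α a) f = conv (LinearMap.mul k A) f (β a))
    (hμ : ∀ a, conv (LinearMap.mul k E) μ (j ∘ₗ α a) = LinearMap.mulLeft k (j a) ∘ₗ μ)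
    (hγ : ∀ a, conv (LinearMap.mul k E) (j ∘ₗ β a) γ = (LinearMap.mul k E).flip (j a) ∘ₗ γ)
    (c : C) {n : ℕ} (φ : CoHCh k A M (n + 1)) :
    bd n (Bi.twistHomotopy μ γ (qbar k A ∘ₗ f) α' β' c φ) +
        Bi.twistHomotopy μ γ (qbar k A ∘ₗ f) α' β' c (bd (n + 1) φ) =
      Bi.twist (conv (LinearMap.mul k E) μ (j ∘ₗ f)) γ β' c φ -
        Bi.twist μ (conv (LinearMap.mul k E) (j ∘ₗ f) γ) α' c φ := by
  refine Tpow.comp_map_cancel (unitSub k A).mkQ_surjective ?_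
  rw [LinearMap.add_comp, LinearMap.sub_comp, hbd.comp_map_qbar,
    Bi.twistHomotopy_comp_map μ γ hα' hβ', Bi.twistHomotopy_comp_map μ γ hα' hβ', hbd.comp_map_qbar,
    Bi.twist_comp_map _ _ hα', Bi.twist_comp_map _ _ hβ',
    Bi.coboundary_twistHomotopy μ γ hα hβ hf hμ hγ]

end NormalizedTwist

section RightModule

variable {k H Q : Type*} [Ring k] [Semiring H] [AddCommGroup Q] [Module k Q]

lemma exists_rightModule {ρ : H → Module.End k Q} (hadd : ∀ h l, ρ (h + l) = ρ h + ρ l)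
    (hone : ρ 1 = 1) (hmul : ∀ h l, ρ (h * l) = ρ l * ρ h) :
    ∃ _ : Module Hᵐᵒᵖ Q, ∀ (h : H) (x : Q), MulOpposite.op h • x = ρ h x :=
  let f : Hᵐᵒᵖ →* Module.End k Q := ⟨⟨fun h => ρ h.unop, hone⟩, fun h l => hmul l.unop h.unop⟩
  ⟨Module.compHom Q (RingHom.mk' f fun h l => hadd h.unop l.unop), fun _ _ => rfl⟩

lemma exists_rightModule_submodule {ρ : H → Module.End k Q} {Z : Submodule k Q}
    (hZ : ∀ h, ∀ z ∈ Z, ρ h z ∈ Z) (hadd : ∀ h l, ρ (h + l) = ρ h + ρ l)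
    (hone : ∀ z ∈ Z, ρ 1 z = z) (hmul : ∀ h l, ∀ z ∈ Z, ρ l (ρ h z) = ρ (h * l) z) :
    ∃ _ : Module Hᵐᵒᵖ Z, ∀ (h : H) (z : Q) (hz : z ∈ Z) (hρz : ρ h z ∈ Z),
      MulOpposite.op h • (⟨z, hz⟩ : Z) = ⟨ρ h z, hρz⟩ := by
  obtain ⟨inst, smul_eq⟩ := exists_rightModule (ρ := fun h => (ρ h).restrict (hZ h))
    (fun h l => LinearMap.ext fun z => Subtype.ext (LinearMap.congr_fun (hadd h l) z))
    (LinearMap.ext fun z => Subtype.ext (hone z z.2))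
    (fun h l => LinearMap.ext fun z => Subtype.ext (hmul h l z z.2).symm)
  exact ⟨inst, fun h z hz _ => smul_eq h ⟨z, hz⟩⟩

lemma exists_rightModule_subquotient {ρ : H → Module.End k Q} {Z B : Submodule k Q}
    (hZ : ∀ h, ∀ z ∈ Z, ρ h z ∈ Z) (hB : ∀ h, ∀ z ∈ B, ρ h z ∈ B)
    (hadd : ∀ h l, ρ (h + l) = ρ h + ρ l) (hone : ∀ z ∈ Z, ρ 1 z - z ∈ B)
    (hmul : ∀ h l, ∀ z ∈ Z, ρ l (ρ h z) - ρ (h * l) z ∈ B) :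
    ∃ _ : Module Hᵐᵒᵖ (Z ⧸ B.comap Z.subtype),
      ∀ (h : H) (z : Q) (hz : z ∈ Z) (hρz : ρ h z ∈ Z),
        MulOpposite.op h • (Submodule.Quotient.mk ⟨z, hz⟩ : Z ⧸ B.comap Z.subtype) =
          Submodule.Quotient.mk ⟨ρ h z, hρz⟩ := by
  let σ (h : H) : Module.End k (Z ⧸ B.comap Z.subtype) :=
    Submodule.mapQ _ _ ((ρ h).restrict (hZ h)) fun z hz => hB h z hz
  obtain ⟨inst, smul_eq⟩ := exists_rightModule (ρ := σ)
    (fun h l => Submodule.linearMap_qext _ <| LinearMap.ext fun z =>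
      congrArg Submodule.Quotient.mk (Subtype.ext (LinearMap.congr_fun (hadd h l) z)))
    (Submodule.linearMap_qext _ <| LinearMap.ext fun z =>
      (Submodule.Quotient.eq _).2 (hone z z.2))
    (fun h l => Submodule.linearMap_qext _ <| LinearMap.ext fun z =>
      ((Submodule.Quotient.eq (B.comap Z.subtype)).2 (hmul h l z z.2)).symm)
  exact ⟨inst, fun h z hz _ => smul_eq h _⟩

end RightModule

section RightAction

variable {k A H E M : Type} [CommRing k] [Ring A] [Algebra k A] [Ring H] [HopfAlgebra k H]
  [Ring E] [Algebra k E] [AddCommGroup M] [Module k M]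

lemma conv_comp_mul' {X Y Z : Type} [AddCommGroup X] [Module k X] [AddCommGroup Y] [Module k Y]
    [AddCommGroup Z] [Module k Z] (B : X →ₗ[k] Y →ₗ[k] Z) (F : H →ₗ[k] X) (G : H →ₗ[k] Y) :
    conv B F G ∘ₗ LinearMap.mul' k H =
      conv B (F ∘ₗ LinearMap.mul' k H) (G ∘ₗ LinearMap.mul' k H) :=
  conv_comp_coalgHom B F G (Bialgebra.mulCoalgHom k H)

namespace CrossedProduct

variable (S : CrossedProduct k A H E) {finv : H →ₗ[k] H →ₗ[k] A}

lemma hEInv_one (hf : IsConvInverse S.f finv) : S.hEInv finv 1 = 1 := by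
  have inv_mul := LinearMap.congr_fun (S.conv_hEInv_hE hf) 1
  simpa [conv_groupLike _ _ _ IsGroupLikeElem.one, hE_one, convConst_apply] using inv_mul

/-- The convolution inverse `h ⊗ l ↦ (1 # l)⁻¹(1 # h)⁻¹` of `h ⊗ l ↦ (1 # h)(1 # l)`. -/
def hEInv₂ (finv : H →ₗ[k] H →ₗ[k] A) : H ⊗[k] H →ₗ[k] E :=
  TensorProduct.lift ((LinearMap.mul k E).flip.compl₁₂ (S.hEInv finv) (S.hEInv finv))

lemma conv_hEInv₂_f (hf : IsConvInverse S.f finv) :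
    conv (LinearMap.mul k E) (S.hEInv₂ finv) (S.aE ∘ₗ TensorProduct.lift S.f) =
      S.hEInv finv ∘ₗ LinearMap.mul' k H := by
  refine eq_of_conv_eq_one (G := S.hE ∘ₗ LinearMap.mul' k H) ?_ ?_
  · rw [conv_mul_assoc, ← S.hE₂_eq_conv]
    exact conv_lift_mul_eq_one (S.conv_hEInv_hE hf) (S.conv_hEInv_hE hf)
  · rw [← conv_comp_mul', S.conv_hE_hEInv hf]
    exact convConst_comp_coalgHom 1 (Bialgebra.mulCoalgHom k H)

lemma hE_mul'_mul_aE (a : A) :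
    conv (LinearMap.mul k E) (S.aE ∘ₗ S.act.flip a ∘ₗ LinearMap.mul' k H)
        (S.hE ∘ₗ LinearMap.mul' k H) =
      (LinearMap.mul k E).flip (S.aE a) ∘ₗ S.hE ∘ₗ LinearMap.mul' k H := by
  rw [← LinearMap.comp_assoc, ← conv_comp_mul', ← hE_mul_aE, LinearMap.comp_assoc]

/-- The homotopy between `θ_l ∘ θ_h` and `θ_{hl}`, which inserts the cocycle `f` into the
arguments of a cochain. -/
def mulHomotopy (Bi : Bimod k E M) (finv : H →ₗ[k] H →ₗ[k] A) (h l : H) {n : ℕ} :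
    CoHCh k A M (n + 1) →ₗ[k] CoHCh k A M n :=
  Bi.twistHomotopy (S.hEInv₂ finv) (S.hE ∘ₗ LinearMap.mul' k H)
    (qbar k A ∘ₗ TensorProduct.lift S.f) (tensorAct S.actBar S.actBar)
    (LinearMap.lcomp k _ (LinearMap.mul' k H) ∘ₗ S.actBar) (h ⊗ₜ[k] l)

end CrossedProduct

lemma WeakAction.act_flip_mul'_mul (W : WeakAction k A H) (a b : A) :
    W.act.flip (a * b) ∘ₗ LinearMap.mul' k H =
      conv (LinearMap.mul k A) (W.act.flip a ∘ₗ LinearMap.mul' k H)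
        (W.act.flip b ∘ₗ LinearMap.mul' k H) := by
  rw [W.act_flip_mul, conv_comp_mul']

namespace IsCoTheta

variable {S : CrossedProduct k A H E} {Bi : Bimod k E M} {finv : H →ₗ[k] H →ₗ[k] A}
  {θ : H → ∀ r : ℕ, CoHCh k A M r →ₗ[k] CoHCh k A M r} (hθ : IsCoTheta S Bi finv θ)

include hθ

lemma map_add (h l : H) (n : ℕ) : θ (h + l) n = θ h n + θ l n := by
  ext1 φ
  simp only [hθ.eq_twist, Bimod.twist_add, LinearMap.add_apply]

lemma map_one (hf : IsConvInverse S.f finv) (n : ℕ) : θ 1 n = .id := by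
  ext1 φ
  rw [hθ.eq_twist]
  exact Bi.twist_groupLike _ _ IsGroupLikeElem.one (S.hEInv_one hf) S.hE_one S.actBar_one φ

lemma apply_apply_eq_twist (h l : H) (n : ℕ) (φ : CoHCh k A M n) :
    θ l n (θ h n φ) =
      Bi.twist (S.hEInv₂ finv) S.hE₂ (tensorAct S.actBar S.actBar) (h ⊗ₜ[k] l) φ := by
  rw [hθ.eq_twist, hθ.eq_twist, Bi.twist_twist]
  rfl

lemma mul_eq_twist (h l : H) (n : ℕ) (φ : CoHCh k A M n) :
    θ (h * l) n φ = Bi.twist (S.hEInv finv ∘ₗ LinearMap.mul' k H) (S.hE ∘ₗ LinearMap.mul' k H)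
      (LinearMap.lcomp k _ (LinearMap.mul' k H) ∘ₗ S.actBar) (h ⊗ₜ[k] l) φ := by
  rw [hθ.eq_twist]
  exact (Bi.twist_comp_coalgHom (Bialgebra.mulCoalgHom k H) (S.hEInv finv) S.hE S.actBar
    (h ⊗ₜ[k] l) φ).symm

variable {bd : ∀ n : ℕ, CoHCh k A M n →ₗ[k] CoHCh k A M (n + 1)}

lemma bd_comp (hf : IsConvInverse S.f finv)
    (hbd : IsHochschildCoD k (Bi.l ∘ₗ S.aE) (Bi.r ∘ₗ S.aE) bd) (h : H) (n : ℕ) :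
    bd n ∘ₗ θ h n = θ h (n + 1) ∘ₗ bd n := by
  ext1 φ
  simp only [LinearMap.comp_apply, hθ.eq_twist]
  exact hbd.bd_twist S.actBar_qbar S.act_flip_mul (S.conv_hEInv_aE_act hf)
    (fun a => (S.hE_mul_aE a).symm) h n φ

lemma mulHomotopy_bd_zero (hf : IsConvInverse S.f finv)
    (hbd : IsHochschildCoD k (Bi.l ∘ₗ S.aE) (Bi.r ∘ₗ S.aE) bd) (h l : H) (φ : CoHCh k A M 0) :
    S.mulHomotopy Bi finv h l (bd 0 φ) = θ (h * l) 0 φ - θ l 0 (θ h 0 φ) := by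
  rw [hθ.apply_apply_eq_twist, hθ.mul_eq_twist, ← S.conv_hEInv₂_f hf, S.hE₂_eq_conv]
  exact hbd.twistHomotopy_bd_zero (α := tensorAct S.act.flip S.act.flip)
    (β := LinearMap.lcomp k A (LinearMap.mul' k H) ∘ₗ S.act.flip)
    (tensorAct_comp S.actBar_qbar S.actBar_qbar) (fun _ => rfl) (h ⊗ₜ[k] l) φ

lemma bd_mulHomotopy (hf : IsConvInverse S.f finv)
    (hbd : IsHochschildCoD k (Bi.l ∘ₗ S.aE) (Bi.r ∘ₗ S.aE) bd) (h l : H) (n : ℕ)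
    (φ : CoHCh k A M (n + 1)) :
    bd n (S.mulHomotopy Bi finv h l φ) + S.mulHomotopy Bi finv h l (bd (n + 1) φ) =
      θ (h * l) (n + 1) φ - θ l (n + 1) (θ h (n + 1) φ) := by
  rw [hθ.apply_apply_eq_twist, hθ.mul_eq_twist, ← S.conv_hEInv₂_f hf, S.hE₂_eq_conv]
  exact hbd.bd_twistHomotopy (β := LinearMap.lcomp k A (LinearMap.mul' k H) ∘ₗ S.act.flip)
    (tensorAct_comp S.actBar_qbar S.actBar_qbar) (fun _ => rfl)
    (tensorAct_mul S.act_flip_mul S.act_flip_mul) S.act_flip_mul'_mul S.f_twisted.conv_lift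
    (conv_tensorAct (S.conv_hEInv_aE_act hf) (S.conv_hEInv_aE_act hf)) S.hE_mul'_mul_aE
    (h ⊗ₜ[k] l) φ

lemma apply_apply_zero (hf : IsConvInverse S.f finv)
    (hbd : IsHochschildCoD k (Bi.l ∘ₗ S.aE) (Bi.r ∘ₗ S.aE) bd) (h l : H) {φ : CoHCh k A M 0}
    (hφ : bd 0 φ = 0) : θ l 0 (θ h 0 φ) = θ (h * l) 0 φ := by
  have homotopy := hθ.mulHomotopy_bd_zero hf hbd h l φ
  rw [hφ, LinearMap.map_zero] at homotopy
  exact (sub_eq_zero.1 homotopy.symm).symm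

lemma apply_apply_sub_mem_range (hf : IsConvInverse S.f finv)
    (hbd : IsHochschildCoD k (Bi.l ∘ₗ S.aE) (Bi.r ∘ₗ S.aE) bd) (h l : H) {n : ℕ}
    {φ : CoHCh k A M (n + 1)} (hφ : bd (n + 1) φ = 0) :
    θ l (n + 1) (θ h (n + 1) φ) - θ (h * l) (n + 1) φ ∈ LinearMap.range (bd n) := by
  have homotopy := hθ.bd_mulHomotopy hf hbd h l n φ
  rw [hφ, LinearMap.map_zero, add_zero] at homotopy
  rw [← neg_sub, ← homotopy]
  exact neg_mem ⟨_, rfl⟩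

end IsCoTheta

end RightAction

section Statement14

variable {k A H E M : Type} [CommRing k] [Ring A] [Algebra k A] [Ring H] [HopfAlgebra k H]
  [Ring E] [Algebra k E] [AddCommGroup M] [Module k M]

/-- **The right `H`-module structure on Hochschild cohomology `H^*(A, M)`.**
Let `E = A #_f H` be a crossed product with convolution invertible cocycle, and let `M` be
an `E`-bimodule, regarded as an `A`-bimodule via `a ↦ a # 1`.  The maps
`θ_h^r(φ)(𝐚) = (1 # h⁽¹⁾)⁻¹ φ(𝐚^{h⁽²⁾}) (1 # h⁽³⁾)` form an endomorphism of the
normalized Hochschild cochain complex `(Hom_k(Ā^*, M), b^*)`.  On Hochschild cohomology,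
the endomorphisms induced by `θ_l ∘ θ_h` and by `θ_{hl}` coincide, and `θ_1` induces the
identity; consequently `H^*(A, M)` carries a right `H`-module structure. -/
theorem hochschild_cohomology_H_module
    (S : CrossedProduct k A H E) (Bi : Bimod k E M)
    (finv : H →ₗ[k] H →ₗ[k] A) (hfinv : IsConvInverse S.f finv)
    (bd : ∀ n : ℕ, CoHCh k A M n →ₗ[k] CoHCh k A M (n + 1))
    (hbd : IsHochschildCoD k (Bi.l ∘ₗ S.aE) (Bi.r ∘ₗ S.aE) bd)
    (θ : H → ∀ r : ℕ, CoHCh k A M r →ₗ[k] CoHCh k A M r) (hθ : IsCoTheta S Bi finv θ) :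
    -- `θ_h` is an endomorphism of the normalized Hochschild cochain complex
    (∀ (h : H) (r : ℕ), bd r ∘ₗ θ h r = θ h (r + 1) ∘ₗ bd r) ∧
    -- `θ_l ∘ θ_h` and `θ_{hl}` induce the same endomorphism of cohomology
    (∀ (h l : H) (φ : CoHCh k A M 0), bd 0 φ = 0 →
        θ l 0 (θ h 0 φ) = θ (h * l) 0 φ) ∧
    (∀ (h l : H) (n : ℕ) (φ : CoHCh k A M (n + 1)), bd (n + 1) φ = 0 →
        θ l (n + 1) (θ h (n + 1) φ) - θ (h * l) (n + 1) φ ∈ LinearMap.range (bd n)) ∧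
    -- `θ_1` induces the identity on cohomology
    (∀ φ : CoHCh k A M 0, bd 0 φ = 0 → θ 1 0 φ = φ) ∧
    (∀ (n : ℕ) (φ : CoHCh k A M (n + 1)), bd (n + 1) φ = 0 →
        θ 1 (n + 1) φ - φ ∈ LinearMap.range (bd n)) ∧
    -- consequently, `H^*(A, M)` is a right `H`-module via `[φ] • h = [θ_h φ]`
    (∃ inst0 : Module Hᵐᵒᵖ (LinearMap.ker (bd 0)),
      ∀ (h : H) (φ : CoHCh k A M 0) (hφ : φ ∈ LinearMap.ker (bd 0))
        (hθφ : θ h 0 φ ∈ LinearMap.ker (bd 0)),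
        (letI := inst0;
          (MulOpposite.op h) • (⟨φ, hφ⟩ : LinearMap.ker (bd 0)) = ⟨θ h 0 φ, hθφ⟩)) ∧
    (∀ n : ℕ, ∃ instn : Module Hᵐᵒᵖ (LinearMap.ker (bd (n + 1)) ⧸
        (LinearMap.range (bd n)).comap (LinearMap.ker (bd (n + 1))).subtype),
      ∀ (h : H) (φ : CoHCh k A M (n + 1)) (hφ : φ ∈ LinearMap.ker (bd (n + 1)))
        (hθφ : θ h (n + 1) φ ∈ LinearMap.ker (bd (n + 1))),
        (letI := instn;
          (MulOpposite.op h) • (Submodule.Quotient.mk ⟨φ, hφ⟩ :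
              LinearMap.ker (bd (n + 1)) ⧸
                (LinearMap.range (bd n)).comap (LinearMap.ker (bd (n + 1))).subtype) =
            Submodule.Quotient.mk ⟨θ h (n + 1) φ, hθφ⟩)) := by
  have comm (h : H) (n : ℕ) (φ : CoHCh k A M n) : bd n (θ h n φ) = θ h (n + 1) (bd n φ) :=
    LinearMap.congr_fun (hθ.bd_comp hfinv hbd h n) φ
  have cocycle (n : ℕ) (h : H) : ∀ φ ∈ LinearMap.ker (bd n), θ h n φ ∈ LinearMap.ker (bd n) :=
    fun φ hφ => by rw [LinearMap.mem_ker, comm, LinearMap.mem_ker.1 hφ, map_zero]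
  have cobound (n : ℕ) (h : H) :
      ∀ φ ∈ LinearMap.range (bd n), θ h (n + 1) φ ∈ LinearMap.range (bd n) := by
    rintro _ ⟨φ, rfl⟩
    exact ⟨θ h n φ, comm h n φ⟩
  have θ_one (n : ℕ) (φ : CoHCh k A M n) : θ 1 n φ = φ :=
    LinearMap.congr_fun (hθ.map_one hfinv n) φ
  have θ_one_sub_mem (n : ℕ) (φ : CoHCh k A M (n + 1)) :
      θ 1 (n + 1) φ - φ ∈ LinearMap.range (bd n) := by
    rw [θ_one, sub_self]
    exact zero_mem _
  have θ_mul_zero (h l : H) (φ : CoHCh k A M 0) (hφ : bd 0 φ = 0) :=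
    hθ.apply_apply_zero hfinv hbd h l hφ
  have θ_mul_succ (h l : H) (n : ℕ) (φ : CoHCh k A M (n + 1)) (hφ : bd (n + 1) φ = 0) :=
    hθ.apply_apply_sub_mem_range hfinv hbd h l hφ
  exact ⟨hθ.bd_comp hfinv hbd, θ_mul_zero, θ_mul_succ, fun φ _ => θ_one 0 φ,
    fun n φ _ => θ_one_sub_mem n φ,
    exists_rightModule_submodule (cocycle 0) (hθ.map_add · · 0) (fun φ _ => θ_one 0 φ) θ_mul_zero,
    fun n => exists_rightModule_subquotient (cocycle (n + 1)) (cobound n)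
      (hθ.map_add · · (n + 1)) (fun φ _ => θ_one_sub_mem n φ) (θ_mul_succ · · n)⟩

end Statement14

end HopfCrossed
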